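/- arXiv:1801.07524 — 3 statements merged into one kernel-verified Lean document; each statement's English description precedes it below -/
import Mathlib

section
/- Let A be a k-algebra and let t = (t_U) be a family of k-linear maps t_U : End_A(U) → k indexed by the finite-dimensional projective left A-modules U. Then t is a trace on Proj_A, i.e. t_V(g ∘ f) = t_U(f ∘ g) for all finite-dimensional projective A-modules U, V and all A-module maps f : U → V and g : V → U, if and only if the following two conditions hold: (i) t_U(g ∘ f) = t_U(f ∘ g) for all U and all f, g ∈ End_A(U); (ii) t_{U⊕V}(f) = t_U(p_U ∘ f ∘ i_U) + t_V(p_V ∘ f ∘ i_V) for all U, V and all f ∈ End_A(U ⊕ V), where i_U, i_V are the canonical injections and p_U, p_V the canonical projections of the direct sum U ⊕ V. -/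
noncomputable section

universe u

variable (k : Type u) [Field k] (A : Type u) [Ring A] [Algebra k A]

/-- A family of `k`-linear functionals on the endomorphism algebras of the
finite-dimensional projective left `A`-modules. -/
def TraceFam : Type (u + 1) :=
  ∀ (V : Type u) [AddCommGroup V] [Module k V] [Module A V] [IsScalarTower k A V],
    Module.Finite k V → Module.Projective A V → ((V →ₗ[A] V) →ₗ[k] k)

/-- `t` is a trace on `Proj_A`: `t_U(g ∘ f) = t_V(f ∘ g)` for all finite-dimensional
projective `A`-modules `U, V` and all `A`-module maps `f : U → V`, `g : V → U`. -/
def IsTrace (t : TraceFam k A) : Prop :=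
  ∀ (U : Type u) [AddCommGroup U] [Module k U] [Module A U] [IsScalarTower k A U]
    (V : Type u) [AddCommGroup V] [Module k V] [Module A V] [IsScalarTower k A V]
    (hU1 : Module.Finite k U) (hU2 : Module.Projective A U)
    (hV1 : Module.Finite k V) (hV2 : Module.Projective A V)
    (f : U →ₗ[A] V) (g : V →ₗ[A] U),
    t U hU1 hU2 (g.comp f) = t V hV1 hV2 (f.comp g)

/-- Right multiplication `ρ_a : x ↦ xa`, an endomorphism of the left regular module. -/
def rho (a : A) : A →ₗ[A] A where
  toFun x := x * a
  map_add' x y := add_mul x y a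
  map_smul' c x := mul_assoc c x a

/-- a family `t = (t_U)` is a trace on `Proj_A` if and only if
(i) each `t_U` is cyclic on `End_A(U)`, and (ii) `t` is additive on direct sums. -/
theorem statement_1 (t : TraceFam k A) :
    IsTrace k A t ↔
      ((∀ (U : Type u) [AddCommGroup U] [Module k U] [Module A U] [IsScalarTower k A U]
          (hU1 : Module.Finite k U) (hU2 : Module.Projective A U)
          (f g : U →ₗ[A] U),
          t U hU1 hU2 (g.comp f) = t U hU1 hU2 (f.comp g))
       ∧ (∀ (U : Type u) [AddCommGroup U] [Module k U] [Module A U] [IsScalarTower k A U]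
            (V : Type u) [AddCommGroup V] [Module k V] [Module A V] [IsScalarTower k A V]
            (hU1 : Module.Finite k U) (hU2 : Module.Projective A U)
            (hV1 : Module.Finite k V) (hV2 : Module.Projective A V)
            (hUV1 : Module.Finite k (U × V)) (hUV2 : Module.Projective A (U × V))
            (f : (U × V) →ₗ[A] (U × V)),
            t (U × V) hUV1 hUV2 f =
              t U hU1 hU2 ((LinearMap.fst A U V).comp (f.comp (LinearMap.inl A U V)))
              + t V hV1 hV2 ((LinearMap.snd A U V).comp (f.comp (LinearMap.inr A U V))))) := by
  constructor
  · intro h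
    refine ⟨?_, ?_⟩
    · intro U _ _ _ _ hU1 hU2 f g
      exact h U U hU1 hU2 hU1 hU2 f g
    · intro U _ _ _ _ V _ _ _ _ hU1 hU2 hV1 hV2 hUV1 hUV2 f
      have e : f = (LinearMap.inl A U V).comp ((LinearMap.fst A U V).comp f)
          + (LinearMap.inr A U V).comp ((LinearMap.snd A U V).comp f) := by
        apply LinearMap.ext
        intro x
        apply Prod.ext <;> simp
      have h1 := h (U × V) U hUV1 hUV2 hU1 hU2 ((LinearMap.fst A U V).comp f)
        (LinearMap.inl A U V)
      have h2 := h (U × V) V hUV1 hUV2 hV1 hV2 ((LinearMap.snd A U V).comp f)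
        (LinearMap.inr A U V)
      rw [LinearMap.comp_assoc] at h1 h2
      rw [← h1, ← h2, ← map_add, ← e]
  · rintro ⟨h1, h2⟩ U _ _ _ _ V _ _ _ _ hU1 hU2 hV1 hV2 f g
    have hUV1 : Module.Finite k (U × V) := inferInstance
    have hUV2 : Module.Projective A (U × V) := inferInstance
    have key := h1 (U × V) hUV1 hUV2
      ((LinearMap.inr A U V).comp (f.comp (LinearMap.fst A U V)))
      ((LinearMap.inl A U V).comp (g.comp (LinearMap.snd A U V)))
    rw [h2 U V hU1 hU2 hV1 hV2, h2 U V hU1 hU2 hV1 hV2] at key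
    have a1 : (LinearMap.fst A U V).comp ((((LinearMap.inl A U V).comp
        (g.comp (LinearMap.snd A U V))).comp ((LinearMap.inr A U V).comp
        (f.comp (LinearMap.fst A U V)))).comp (LinearMap.inl A U V)) = g.comp f := by
      apply LinearMap.ext; intro x; simp
    have a2 : (LinearMap.snd A U V).comp ((((LinearMap.inl A U V).comp
        (g.comp (LinearMap.snd A U V))).comp ((LinearMap.inr A U V).comp
        (f.comp (LinearMap.fst A U V)))).comp (LinearMap.inr A U V)) = 0 := by
      apply LinearMap.ext; intro x; simp
    have a3 : (LinearMap.fst A U V).comp ((((LinearMap.inr A U V).comp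
        (f.comp (LinearMap.fst A U V))).comp ((LinearMap.inl A U V).comp
        (g.comp (LinearMap.snd A U V)))).comp (LinearMap.inl A U V)) = 0 := by
      apply LinearMap.ext; intro x; simp
    have a4 : (LinearMap.snd A U V).comp ((((LinearMap.inr A U V).comp
        (f.comp (LinearMap.fst A U V))).comp ((LinearMap.inl A U V).comp
        (g.comp (LinearMap.snd A U V)))).comp (LinearMap.inr A U V)) = f.comp g := by
      apply LinearMap.ext; intro x; simp
    rw [a1, a2, a3, a4, map_zero, map_zero, add_zero, zero_add] at key
    exact key
end
end

section
/- Let A be a finite-dimensional algebra over a field k and let t = (t_U) be a trace on Proj_A such that t_A(ρ_a) = 0 for all a ∈ A, where A is the left regular module and ρ_a is right multiplication by a. Then t_U = 0 for every finite-dimensional projective left A-module U. Consequently, the map sending a trace t on Proj_A to the symmetric linear form a ↦ t_A(ρ_a) is a linear isomorphism from the space of traces on Proj_A onto SLF(A). -/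
noncomputable section

universe u

variable (k : Type u) [Field k] (A : Type u) [Ring A] [Algebra k A]

theorem exists_dual_basis_aux (k : Type u) [Field k] (A : Type u) [Ring A] [Algebra k A]
    (V : Type u) [AddCommGroup V] [Module k V] [Module A V]
    [IsScalarTower k A V] (h1 : Module.Finite k V) (h2 : Module.Projective A V) :
    ∃ (n : ℕ) (v : Fin n → V) (c : Fin n → (V →ₗ[A] A)), ∀ x : V, ∑ j, c j x • v j = x := by
  have : Module.Finite A V := Module.Finite.of_restrictScalars_finite k A V
  obtain ⟨n, f, g, hf, hg, hfg⟩ := Module.Finite.exists_comp_eq_id_of_projective A V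
  refine ⟨n, fun j => f (Pi.single j 1), fun j => (LinearMap.proj j).comp g, fun x => ?_⟩
  have h := LinearMap.congr_fun hfg x
  simp only [LinearMap.comp_apply, LinearMap.id_apply] at h
  conv_rhs => rw [← h]
  rw [← Finset.univ_sum_single (g x), map_sum]
  refine Finset.sum_congr rfl fun j _ => ?_
  rw [← map_smul]
  congr 1
  ext i
  by_cases hij : i = j
  · subst hij; simp
  · simp [hij]

/-- The functional `f ↦ ∑ φ (c_j (f v_j))`. -/
def dualTr (k : Type u) [Field k] (A : Type u) [Ring A] [Algebra k A] (φ : A →ₗ[k] k)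
    (V : Type u) [AddCommGroup V] [Module k V] [Module A V]
    [IsScalarTower k A V] {n : ℕ} (v : Fin n → V) (c : Fin n → (V →ₗ[A] A)) :
    (V →ₗ[A] V) →ₗ[k] k where
  toFun f := ∑ j, φ (c j (f (v j)))
  map_add' f g := by simp [Finset.sum_add_distrib]
  map_smul' r f := by
    simp only [LinearMap.smul_apply, LinearMap.map_smul_of_tower, RingHom.id_apply,
      Finset.smul_sum]

/-- The trace family attached to `φ`. -/
def famOf (k : Type u) [Field k] (A : Type u) [Ring A] [Algebra k A] (φ : A →ₗ[k] k) :
    TraceFam k A :=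
  fun V _ _ _ _ h1 h2 =>
    dualTr k A φ V (exists_dual_basis_aux k A V h1 h2).choose_spec.choose
      (exists_dual_basis_aux k A V h1 h2).choose_spec.choose_spec.choose

theorem famOf_spec (k : Type u) [Field k] (A : Type u) [Ring A] [Algebra k A] (φ : A →ₗ[k] k)
    (V : Type u) [AddCommGroup V] [Module k V] [Module A V]
    [IsScalarTower k A V] (h1 : Module.Finite k V) (h2 : Module.Projective A V) :
    ∃ (n : ℕ) (v : Fin n → V) (c : Fin n → (V →ₗ[A] A)), (∀ x : V, ∑ j, c j x • v j = x) ∧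
      ∀ f, famOf k A φ V h1 h2 f = ∑ j, φ (c j (f (v j))) :=
  ⟨_, _, _, (exists_dual_basis_aux k A V h1 h2).choose_spec.choose_spec.choose_spec,
    fun _ => rfl⟩

theorem famOf_isTrace (k : Type u) [Field k] (A : Type u) [Ring A] [Algebra k A] (φ : A →ₗ[k] k)
    (hφ : ∀ x y : A, φ (x * y) = φ (y * x)) : IsTrace k A (famOf k A φ) := by
  intro U _ _ _ _ V _ _ _ _ hU1 hU2 hV1 hV2 f g
  obtain ⟨n, u, b, hb, hU⟩ := famOf_spec k A φ U hU1 hU2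
  obtain ⟨m, v, c, hc, hV⟩ := famOf_spec k A φ V hV1 hV2
  rw [hU, hV]
  have e1 : ∀ i, φ (b i ((g.comp f) (u i))) = ∑ j, φ (c j (f (u i)) * b i (g (v j))) := by
    intro i
    rw [LinearMap.comp_apply]
    conv_lhs => rw [← hc (f (u i))]
    simp only [map_sum, map_smul, smul_eq_mul]
  have e2 : ∀ j, φ (c j ((f.comp g) (v j))) = ∑ i, φ (b i (g (v j)) * c j (f (u i))) := by
    intro j
    rw [LinearMap.comp_apply]
    conv_lhs => rw [← hb (g (v j))]
    simp only [map_sum, map_smul, smul_eq_mul]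
  simp only [e1, e2]
  rw [Finset.sum_comm]
  exact Finset.sum_congr rfl fun j _ => Finset.sum_congr rfl fun i _ => hφ _ _

theorem famOf_rho (k : Type u) [Field k] (A : Type u) [Ring A] [Algebra k A] (φ : A →ₗ[k] k)
    (hφ : ∀ x y : A, φ (x * y) = φ (y * x)) (h1 : Module.Finite k A)
    (h2 : Module.Projective A A) (a : A) : famOf k A φ A h1 h2 (rho A a) = φ a := by
  obtain ⟨n, v, c, hc, h⟩ := famOf_spec k A φ A h1 h2
  rw [h]
  conv_rhs => rw [← hc a]
  rw [map_sum]
  refine Finset.sum_congr rfl fun j _ => ?_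
  have : c j (rho A a (v j)) = v j * c j a := by
    change c j (v j • a) = _
    rw [map_smul, smul_eq_mul]
  rw [this, hφ, smul_eq_mul]

theorem trace_formula (k : Type u) [Field k] (A : Type u) [Ring A] [Algebra k A]
    (t : TraceFam k A) (ht : IsTrace k A t) (h1 : Module.Finite k A) (h2 : Module.Projective A A)
    (V : Type u) [AddCommGroup V] [Module k V] [Module A V] [IsScalarTower k A V]
    (hV1 : Module.Finite k V) (hV2 : Module.Projective A V) {n : ℕ} (v : Fin n → V)
    (c : Fin n → (V →ₗ[A] A)) (hc : ∀ x : V, ∑ j, c j x • v j = x) (f : V →ₗ[A] V) :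
    t V hV1 hV2 f = ∑ j, t A h1 h2 (rho A (c j (f (v j)))) := by
  have hf : f = ∑ j, (LinearMap.toSpanSingleton A V (f (v j))).comp (c j) := by
    ext x
    conv_lhs => rw [← hc x]
    simp only [map_sum, map_smul, LinearMap.sum_apply, LinearMap.comp_apply,
      LinearMap.toSpanSingleton_apply]
  conv_lhs => rw [hf]
  rw [map_sum]
  refine Finset.sum_congr rfl fun j _ => ?_
  rw [ht V A hV1 hV2 h1 h2]
  congr 1
  ext
  simp [rho]

/-- a trace on `Proj_A` vanishing on the regular module vanishes
everywhere; consequently `t ↦ (a ↦ t_A(ρ_a))` is a (linear) isomorphism from the space of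
traces on `Proj_A` onto `SLF(A)`: the image of a trace is a symmetric linear form, and
every symmetric linear form comes from a unique trace. -/
theorem statement_3 [Module.Finite k A] :
    (∀ t : TraceFam k A, IsTrace k A t →
      (∀ (h1 : Module.Finite k A) (h2 : Module.Projective A A) (a : A),
        t A h1 h2 (rho A a) = 0) →
      ∀ (V : Type u) [AddCommGroup V] [Module k V] [Module A V] [IsScalarTower k A V]
        (hV1 : Module.Finite k V) (hV2 : Module.Projective A V) (f : V →ₗ[A] V),
        t V hV1 hV2 f = 0)
    ∧ (∀ t : TraceFam k A, IsTrace k A t →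
        ∀ (h1 : Module.Finite k A) (h2 : Module.Projective A A) (x y : A),
          t A h1 h2 (rho A (x * y)) = t A h1 h2 (rho A (y * x)))
    ∧ (∀ φ : A →ₗ[k] k, (∀ x y : A, φ (x * y) = φ (y * x)) →
        ∃! t : { t : TraceFam k A // IsTrace k A t },
          ∀ (h1 : Module.Finite k A) (h2 : Module.Projective A A) (a : A),
            (t : TraceFam k A) A h1 h2 (rho A a) = φ a) := by
  have h1 : Module.Finite k A := inferInstance
  have h2 : Module.Projective A A := inferInstance
  refine ⟨?_, ?_, ?_⟩
  · intro t ht h0 V _ _ _ _ hV1 hV2 f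
    obtain ⟨n, v, c, hc⟩ := exists_dual_basis_aux k A V hV1 hV2
    rw [trace_formula k A t ht h1 h2 V hV1 hV2 v c hc f]
    exact Finset.sum_eq_zero fun j _ => h0 _ _ _
  · intro t ht h1 h2 x y
    have e : ∀ x y : A, rho A (x * y) = (rho A y).comp (rho A x) := by
      intro x y
      ext
      simp [rho]
    rw [e x y, e y x]
    exact ht A A h1 h2 h1 h2 _ _
  · intro φ hφ
    refine ⟨⟨famOf k A φ, famOf_isTrace k A φ hφ⟩, famOf_rho k A φ hφ, ?_⟩
    rintro ⟨s, hs⟩ hsφ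
    apply Subtype.ext
    funext V _ _ _ _ hV1 hV2
    refine LinearMap.ext fun f => ?_
    obtain ⟨n, v, c, hc⟩ := exists_dual_basis_aux k A V hV1 hV2
    change s V hV1 hV2 f = famOf k A φ V hV1 hV2 f
    rw [trace_formula k A s hs h1 h2 V hV1 hV2 v c hc f,
      trace_formula k A _ (famOf_isTrace k A φ hφ) h1 h2 V hV1 hV2 v c hc f]
    refine Finset.sum_congr rfl fun j _ => ?_
    rw [famOf_rho k A φ hφ]
    exact hsφ _ _ _
end
end

section
/- The 3p − 1 symmetric linear forms χ^+_s, χ^−_s (1 ≤ s ≤ p) and G_{s′} (1 ≤ s′ ≤ p−1) form a basis of SLF(Ū_q); in particular dim SLF(Ū_q) = 3p − 1. -/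
noncomputable section

open scoped TensorProduct

namespace Uqsl2

/-- Generators of the restricted quantum group. -/
inductive gen : Type | E | F | K | Kinv

/-- The primitive `2p`-th root of unity `q = e^{iπ/p}`. -/
def q (p : ℕ) : ℂ := Complex.exp (Real.pi * Complex.I / p)

/-- The `q`-integer `[n] = (q^n - q^{-n})/(q - q^{-1})`. -/
def qi (p : ℕ) (n : ℤ) : ℂ := (q p ^ n - q p ^ (-n)) / (q p - (q p)⁻¹)

/-- The `q`-factorial `[m]!`. -/
def qfact (p m : ℕ) : ℂ := ∏ i ∈ Finset.range m, qi p (i + 1)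

open FreeAlgebra in
/-- The defining relations of `Ū_q(sl₂)`. -/
inductive rel (p : ℕ) : FreeAlgebra ℂ gen → FreeAlgebra ℂ gen → Prop
  | KKinv : rel p (ι ℂ gen.K * ι ℂ gen.Kinv) 1
  | KinvK : rel p (ι ℂ gen.Kinv * ι ℂ gen.K) 1
  | Ep : rel p (ι ℂ gen.E ^ p) 0
  | Fp : rel p (ι ℂ gen.F ^ p) 0
  | K2p : rel p (ι ℂ gen.K ^ (2 * p)) 1
  | KE : rel p (ι ℂ gen.K * ι ℂ gen.E) (q p ^ 2 • (ι ℂ gen.E * ι ℂ gen.K))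
  | KF : rel p (ι ℂ gen.K * ι ℂ gen.F) ((q p ^ 2)⁻¹ • (ι ℂ gen.F * ι ℂ gen.K))
  | EF : rel p (ι ℂ gen.E * ι ℂ gen.F - ι ℂ gen.F * ι ℂ gen.E)
             ((q p - (q p)⁻¹)⁻¹ • (ι ℂ gen.K - ι ℂ gen.Kinv))

/-- The restricted quantum group `Ū_q(sl₂)`, presented by generators and relations. -/
abbrev Uq (p : ℕ) := RingQuot (rel p)

def EE (p : ℕ) : Uq p := RingQuot.mkAlgHom ℂ (rel p) (FreeAlgebra.ι ℂ gen.E)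
def FF (p : ℕ) : Uq p := RingQuot.mkAlgHom ℂ (rel p) (FreeAlgebra.ι ℂ gen.F)
def KK (p : ℕ) : Uq p := RingQuot.mkAlgHom ℂ (rel p) (FreeAlgebra.ι ℂ gen.K)
def KKinv (p : ℕ) : Uq p := RingQuot.mkAlgHom ℂ (rel p) (FreeAlgebra.ι ℂ gen.Kinv)

/-! ### The simple modules `X^α(s)` as matrix representations -/

/-- Matrix of `K` on `X^α(s)` in the canonical basis. -/
def XK (p : ℕ) (α : ℂ) (s : ℕ) : Matrix (Fin s) (Fin s) ℂ :=
  Matrix.diagonal fun i => α * q p ^ ((s : ℤ) - 1 - 2 * (i : ℕ))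

/-- Matrix of `E` on `X^α(s)` in the canonical basis. -/
def XE (p : ℕ) (α : ℂ) (s : ℕ) : Matrix (Fin s) (Fin s) ℂ :=
  Matrix.of fun i j =>
    if (i : ℕ) + 1 = (j : ℕ) then α * qi p (j : ℕ) * qi p ((s : ℤ) - (j : ℕ)) else 0

/-- Matrix of `F` on `X^α(s)` in the canonical basis. -/
def XF (s : ℕ) : Matrix (Fin s) (Fin s) ℂ :=
  Matrix.of fun i j => if (i : ℕ) = (j : ℕ) + 1 then (1 : ℂ) else 0

/-- The statement that `ρX α s` is the representation on `X^α(s)` for the relevant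
values of `α` and `s`. -/
def IsXRep (p : ℕ) (ρX : (α : ℂ) → (s : ℕ) → (Uq p →ₐ[ℂ] Matrix (Fin s) (Fin s) ℂ)) : Prop :=
  ∀ α : ℂ, (α = 1 ∨ α = -1) → ∀ s : ℕ, 1 ≤ s → s ≤ p →
    ρX α s (KK p) = XK p α s ∧ ρX α s (EE p) = XE p α s ∧ ρX α s (FF p) = XF s

/-! ### The projective modules `P^α(s)` as matrix representations -/

/-- Index for the standard basis `(b_i, x_j, y_k, a_l)` of `P^α(s)`. -/
abbrev PIdx (p s : ℕ) := Fin s ⊕ (Fin (p - s) ⊕ (Fin (p - s) ⊕ Fin s))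

/-- Diagonal of the matrix of `K` on `P^α(s)`. -/
def PKdiag (p : ℕ) (α : ℂ) (s : ℕ) : PIdx p s → ℂ
  | .inl i => α * q p ^ ((s : ℤ) - 1 - 2 * (i : ℕ))
  | .inr (.inl j) => -α * q p ^ ((p : ℤ) - s - 1 - 2 * (j : ℕ))
  | .inr (.inr (.inl k)) => -α * q p ^ ((p : ℤ) - s - 1 - 2 * (k : ℕ))
  | .inr (.inr (.inr l)) => α * q p ^ ((s : ℤ) - 1 - 2 * (l : ℕ))

/-- Matrix of `K` on `P^α(s)` in the standard basis. -/
def PK (p : ℕ) (α : ℂ) (s : ℕ) : Matrix (PIdx p s) (PIdx p s) ℂ :=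
  Matrix.diagonal (PKdiag p α s)

/-- Matrix of `E` on `P^α(s)` in the standard basis. -/
def PE (p : ℕ) (α : ℂ) (s : ℕ) : Matrix (PIdx p s) (PIdx p s) ℂ :=
  Matrix.of fun i j =>
    match i, j with
    | .inl i, .inl j =>
        if (i : ℕ) + 1 = (j : ℕ) then α * qi p (j : ℕ) * qi p ((s : ℤ) - (j : ℕ)) else 0
    | .inr (.inl jx), .inl j => if (j : ℕ) = 0 ∧ (jx : ℕ) + 1 = p - s then 1 else 0
    | .inr (.inr (.inr l)), .inl j => if (l : ℕ) + 1 = (j : ℕ) then 1 else 0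
    | .inr (.inl i), .inr (.inl j) =>
        if (i : ℕ) + 1 = (j : ℕ) then -α * qi p (j : ℕ) * qi p ((p : ℤ) - s - (j : ℕ)) else 0
    | .inr (.inr (.inl i)), .inr (.inr (.inl k)) =>
        if (i : ℕ) + 1 = (k : ℕ) then -α * qi p (k : ℕ) * qi p ((p : ℤ) - s - (k : ℕ)) else 0
    | .inr (.inr (.inr l)), .inr (.inr (.inl k)) =>
        if (k : ℕ) = 0 ∧ (l : ℕ) + 1 = s then 1 else 0
    | .inr (.inr (.inr i)), .inr (.inr (.inr l)) =>
        if (i : ℕ) + 1 = (l : ℕ) then α * qi p (l : ℕ) * qi p ((s : ℤ) - (l : ℕ)) else 0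
    | _, _ => 0

/-- Matrix of `F` on `P^α(s)` in the standard basis. -/
def PF (p s : ℕ) : Matrix (PIdx p s) (PIdx p s) ℂ :=
  Matrix.of fun i j =>
    match i, j with
    | .inl i, .inl j => if (i : ℕ) = (j : ℕ) + 1 then (1 : ℂ) else 0
    | .inr (.inr (.inl k)), .inl j => if (j : ℕ) + 1 = s ∧ (k : ℕ) = 0 then 1 else 0
    | .inr (.inl i), .inr (.inl j) => if (i : ℕ) = (j : ℕ) + 1 then 1 else 0
    | .inr (.inr (.inr l)), .inr (.inl j) => if (j : ℕ) + 1 = p - s ∧ (l : ℕ) = 0 then 1 else 0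
    | .inr (.inr (.inl i)), .inr (.inr (.inl k)) => if (i : ℕ) = (k : ℕ) + 1 then 1 else 0
    | .inr (.inr (.inr i)), .inr (.inr (.inr l)) => if (i : ℕ) = (l : ℕ) + 1 then 1 else 0
    | _, _ => 0

/-- The statement that `ρP α s` is the representation on `P^α(s)` for the relevant
values of `α` and `s`. -/
def IsPRep (p : ℕ)
    (ρP : (α : ℂ) → (s : ℕ) → (Uq p →ₐ[ℂ] Matrix (PIdx p s) (PIdx p s) ℂ)) : Prop :=
  ∀ α : ℂ, (α = 1 ∨ α = -1) → ∀ s : ℕ, 1 ≤ s → s ≤ p - 1 →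
    ρP α s (KK p) = PK p α s ∧ ρP α s (EE p) = PE p α s ∧ ρP α s (FF p) = PF p s

/-! ### Symmetric linear forms, characters, and the forms `G_s` -/

/-- Symmetric linear forms. -/
def IsSLF (p : ℕ) (φ : Uq p →ₗ[ℂ] ℂ) : Prop := ∀ x y : Uq p, φ (x * y) = φ (y * x)

/-- The character of a matrix representation. -/
def chiOf (p : ℕ) {n : Type} [Fintype n] [DecidableEq n]
    (ρ : Uq p →ₐ[ℂ] Matrix n n ℂ) : Uq p →ₗ[ℂ] ℂ :=
  (Matrix.traceLinearMap n ℂ ℂ).comp ρ.toLinearMap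

/-- The matrix entry functional. -/
def entry {n : Type} (i j : n) : Matrix n n ℂ →ₗ[ℂ] ℂ where
  toFun M := M i j
  map_add' _ _ := rfl
  map_smul' _ _ := rfl

/-- The symmetric linear form `G_s = tr H^+_s + tr H^-_{p-s}`. -/
def GOf (p : ℕ)
    (ρP : (α : ℂ) → (s : ℕ) → (Uq p →ₐ[ℂ] Matrix (PIdx p s) (PIdx p s) ℂ))
    (s : ℕ) : Uq p →ₗ[ℂ] ℂ :=
  (∑ i : Fin s,
    (entry (Sum.inr (Sum.inr (Sum.inr i))) (Sum.inl i)).comp (ρP 1 s).toLinearMap) +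
  (∑ j : Fin (p - s),
    (entry (Sum.inr (Sum.inr (Sum.inr j))) (Sum.inl j)).comp (ρP (-1) (p - s)).toLinearMap)

/-! ### Convolution product -/

/-- The convolution product of two linear forms, with respect to a comultiplication `Δ`. -/
def conv (p : ℕ) (Δ : Uq p →ₐ[ℂ] (Uq p ⊗[ℂ] Uq p)) (φ ψ : Uq p →ₗ[ℂ] ℂ) :
    Uq p →ₗ[ℂ] ℂ :=
  (LinearMap.mul' ℂ ℂ).comp ((TensorProduct.map φ ψ).comp Δ.toLinearMap)

/-- The statement that `Δ` is the comultiplication of `Ū_q(sl₂)`. -/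
def IsCoprod (p : ℕ) (Δ : Uq p →ₐ[ℂ] (Uq p ⊗[ℂ] Uq p)) : Prop :=
  Δ (EE p) = 1 ⊗ₜ[ℂ] EE p + EE p ⊗ₜ[ℂ] KK p ∧
  Δ (FF p) = FF p ⊗ₜ[ℂ] 1 + KKinv p ⊗ₜ[ℂ] FF p ∧
  Δ (KK p) = KK p ⊗ₜ[ℂ] KK p ∧
  Δ (KKinv p) = KKinv p ⊗ₜ[ℂ] KKinv p


/-- The space of symmetric linear forms, as a subspace of the dual. -/
def SLFsub (p : ℕ) : Submodule ℂ (Uq p →ₗ[ℂ] ℂ) where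
  carrier := {φ | IsSLF p φ}
  add_mem' := by intro φ ψ hφ hψ x y; simp [hφ x y, hψ x y]
  zero_mem' := by intro x y; rfl
  smul_mem' := by intro c φ hφ x y; simp [hφ x y]

/-- The index set of the GTA basis: `χ^±_s` for `1 ≤ s ≤ p` and `G_{s'}` for
`1 ≤ s' ≤ p-1`. -/
abbrev GTAidx (p : ℕ) := (Bool × Fin p) ⊕ Fin (p - 1)

/-- The GTA family `χ^+_1, …, χ^+_p, χ^-_1, …, χ^-_p, G_1, …, G_{p-1}`. -/
def GTA (p : ℕ) (ρX : (α : ℂ) → (s : ℕ) → (Uq p →ₐ[ℂ] Matrix (Fin s) (Fin s) ℂ))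
    (ρP : (α : ℂ) → (s : ℕ) → (Uq p →ₐ[ℂ] Matrix (PIdx p s) (PIdx p s) ℂ)) :
    GTAidx p → (Uq p →ₗ[ℂ] ℂ)
  | .inl (b, s) => chiOf p (ρX (if b then 1 else -1) ((s : ℕ) + 1))
  | .inr t => GOf p ρP ((t : ℕ) + 1)

/-! ### Elementary facts on `q` -/

lemma q_prim (p : ℕ) (hp : 2 ≤ p) : IsPrimitiveRoot (q p) (2 * p) := by
  have h := Complex.isPrimitiveRoot_exp (2 * p) (by omega)
  have hp' : (p : ℂ) ≠ 0 := by exact_mod_cast (by omega : p ≠ 0)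
  have : q p = Complex.exp (2 * Real.pi * Complex.I / ((2 * p : ℕ) : ℂ)) := by
    unfold q
    congr 1
    push_cast
    field_simp
  rw [this]
  exact h

lemma q_ne (p : ℕ) : q p ≠ 0 := Complex.exp_ne_zero _

lemma q_zpow_one_iff (p : ℕ) (hp : 2 ≤ p) (k : ℤ) : q p ^ k = 1 ↔ (2 * (p : ℤ)) ∣ k := by
  rw [(q_prim p hp).zpow_eq_one_iff_dvd]
  push_cast
  rfl

lemma q_zpow_eq_iff (p : ℕ) (hp : 2 ≤ p) (a b : ℤ) :
    q p ^ a = q p ^ b ↔ (2 * (p : ℤ)) ∣ a - b := by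
  rw [← q_zpow_one_iff p hp, zpow_sub₀ (q_ne p), div_eq_one_iff_eq (zpow_ne_zero _ (q_ne p))]

lemma q_pow_p (p : ℕ) (hp : 2 ≤ p) : q p ^ (p : ℤ) = -1 := by
  have h2 : (q p ^ (p : ℤ)) ^ 2 = 1 := by
    rw [← zpow_natCast, ← zpow_mul, q_zpow_one_iff p hp]
    exact ⟨1, by push_cast; ring⟩
  have h1 : q p ^ (p : ℤ) ≠ 1 := by
    rw [Ne, q_zpow_one_iff p hp]
    intro h
    have := Int.le_of_dvd (by omega) h
    omega
  rcases eq_or_eq_neg_of_sq_eq_sq (q p ^ (p : ℤ)) 1 (by rw [h2, one_pow]) with h | h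
  · exact absurd h h1
  · exact h

/-- `q - q⁻¹` -/
def dq (p : ℕ) : ℂ := q p - (q p)⁻¹

lemma dq_ne (p : ℕ) (hp : 2 ≤ p) : dq p ≠ 0 := by
  unfold dq
  intro h
  have h1 : q p ^ (1 : ℤ) = q p ^ (-1 : ℤ) := by
    rw [zpow_one, zpow_neg_one]
    exact sub_eq_zero.mp h
  rw [q_zpow_eq_iff p hp] at h1
  have := Int.le_of_dvd (by omega) h1
  omega

/-- Casimir values -/
def cv (p : ℕ) (k : ℤ) : ℂ := (q p ^ k + q p ^ (-k)) / dq p ^ 2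

lemma cv_eq_iff (p : ℕ) (hp : 2 ≤ p) (a b : ℤ) :
    cv p a = cv p b ↔ (2 * (p : ℤ)) ∣ a - b ∨ (2 * (p : ℤ)) ∣ a + b := by
  unfold cv
  rw [div_left_inj' (pow_ne_zero _ (dq_ne p hp)), ← q_zpow_eq_iff p hp, ← q_zpow_one_iff p hp]
  have ha := zpow_ne_zero a (q_ne p)
  have hb := zpow_ne_zero b (q_ne p)
  rw [zpow_neg, zpow_neg, zpow_add₀ (q_ne p)]
  generalize q p ^ a = x at *
  generalize q p ^ b = y at *
  have key : x + x⁻¹ = y + y⁻¹ ↔ (x - y) * (x * y - 1) = 0 := by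
    constructor
    · intro h
      field_simp at h
      linear_combination h
    · intro h
      field_simp
      linear_combination h
  rw [key, mul_eq_zero, sub_eq_zero, sub_eq_zero]

lemma cv_inj (p : ℕ) (hp : 2 ≤ p) (a b : ℕ) (ha : a ≤ p) (hb : b ≤ p)
    (h : cv p a = cv p b) : a = b := by
  rcases (cv_eq_iff p hp a b).mp h with ⟨k, h⟩ | ⟨k, h⟩
  · have h1 : k < 1 := by nlinarith
    have h2 : -1 < k := by nlinarith
    have : k = 0 := by omega
    subst this
    omega
  · have h1 : k < 2 := by nlinarith
    have h2 : -1 < k := by nlinarith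
    have : k = 0 ∨ k = 1 := by omega
    rcases this with rfl | rfl <;> omega

/-! ### Relations in `Uq` -/

section relations
variable (p : ℕ)

lemma KKinv_mul : KK p * KKinv p = 1 := by
  have := RingQuot.mkAlgHom_rel ℂ (rel.KKinv (p := p))
  simpa [KK, KKinv] using this

lemma Kinv_mul : KKinv p * KK p = 1 := by
  have := RingQuot.mkAlgHom_rel ℂ (rel.KinvK (p := p))
  simpa [KK, KKinv] using this

lemma E_pow : EE p ^ p = 0 := by
  have := RingQuot.mkAlgHom_rel ℂ (rel.Ep (p := p))
  simpa [EE] using this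

lemma F_pow : FF p ^ p = 0 := by
  have := RingQuot.mkAlgHom_rel ℂ (rel.Fp (p := p))
  simpa [FF] using this

lemma K_pow : KK p ^ (2 * p) = 1 := by
  have := RingQuot.mkAlgHom_rel ℂ (rel.K2p (p := p))
  simpa [KK] using this

lemma K_E : KK p * EE p = q p ^ (2 : ℤ) • (EE p * KK p) := by
  have := RingQuot.mkAlgHom_rel ℂ (rel.KE (p := p))
  rw [zpow_ofNat]
  simpa [KK, EE] using this

lemma K_F : KK p * FF p = q p ^ (-2 : ℤ) • (FF p * KK p) := by
  have := RingQuot.mkAlgHom_rel ℂ (rel.KF (p := p))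
  rw [zpow_neg, zpow_ofNat]
  simpa [KK, FF] using this

lemma E_F : EE p * FF p - FF p * EE p = (dq p)⁻¹ • (KK p - KKinv p) := by
  have := RingQuot.mkAlgHom_rel ℂ (rel.EF (p := p))
  simpa [KK, KKinv, EE, FF, dq] using this

lemma Kinv_E : KKinv p * EE p = q p ^ (-2 : ℤ) • (EE p * KKinv p) := by
  have h : EE p * KKinv p = q p ^ (2 : ℤ) • (KKinv p * EE p) := by
    calc EE p * KKinv p = KKinv p * (KK p * EE p) * KKinv p := by
          rw [← mul_assoc, Kinv_mul, one_mul]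
      _ = q p ^ (2 : ℤ) • (KKinv p * EE p * (KK p * KKinv p)) := by
          rw [K_E]; simp only [mul_smul_comm, smul_mul_assoc, mul_assoc]
      _ = _ := by rw [KKinv_mul, mul_one]
  rw [h, smul_smul, ← zpow_add₀ (q_ne p)]
  simp

lemma Kinv_F : KKinv p * FF p = q p ^ (2 : ℤ) • (FF p * KKinv p) := by
  have h : FF p * KKinv p = q p ^ (-2 : ℤ) • (KKinv p * FF p) := by
    calc FF p * KKinv p = KKinv p * (KK p * FF p) * KKinv p := by
          rw [← mul_assoc, Kinv_mul, one_mul]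
      _ = q p ^ (-2 : ℤ) • (KKinv p * FF p * (KK p * KKinv p)) := by
          rw [K_F]; simp only [mul_smul_comm, smul_mul_assoc, mul_assoc]
      _ = _ := by rw [KKinv_mul, mul_one]
  rw [h, smul_smul, ← zpow_add₀ (q_ne p)]
  simp

lemma subalg_top (S : Subalgebra ℂ (Uq p)) (hE : EE p ∈ S) (hF : FF p ∈ S) (hK : KK p ∈ S)
    (hKi : KKinv p ∈ S) (x : Uq p) : x ∈ S := by
  obtain ⟨y, rfl⟩ := RingQuot.mkAlgHom_surjective ℂ (rel p) x
  induction y using FreeAlgebra.induction with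
  | grade0 r => simp only [AlgHom.commutes]; exact S.algebraMap_mem r
  | grade1 g => cases g <;> assumption
  | mul a b ha hb => rw [map_mul]; exact S.mul_mem ha hb
  | add a b ha hb => rw [map_add]; exact S.add_mem ha hb

/-- Casimir element -/
def CC : Uq p := FF p * EE p + (dq p ^ 2)⁻¹ • (q p • KK p + (q p)⁻¹ • KKinv p)

lemma CC_eq' (hp : 2 ≤ p) :
    CC p = EE p * FF p + (dq p ^ 2)⁻¹ • ((q p)⁻¹ • KK p + q p • KKinv p) := by
  have h : EE p * FF p = FF p * EE p + (dq p)⁻¹ • (KK p - KKinv p) := by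
    rw [← E_F]; abel
  have hd := dq_ne p hp
  rw [h, CC]
  have h2 : (dq p)⁻¹ = (dq p ^ 2)⁻¹ * (q p - (q p)⁻¹) := by
    change _ = (dq p ^ 2)⁻¹ * dq p
    field_simp
  rw [h2]
  module

lemma CC_comm_E (hp : 2 ≤ p) : CC p * EE p = EE p * CC p := by
  have hq := q_ne p
  conv_lhs => rw [CC_eq' p hp]
  rw [CC, add_mul, mul_add, mul_assoc]
  congr 1
  simp only [smul_mul_assoc, add_mul, mul_smul_comm, mul_add, K_E, Kinv_E, smul_smul]
  congr 3
  · rw [zpow_ofNat]; field_simp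
  · rw [zpow_neg, zpow_ofNat]; field_simp

lemma CC_comm_F (hp : 2 ≤ p) : CC p * FF p = FF p * CC p := by
  have hq := q_ne p
  conv_rhs => rw [CC_eq' p hp]
  rw [CC, add_mul, mul_add, mul_assoc]
  congr 1
  simp only [smul_mul_assoc, add_mul, mul_smul_comm, mul_add, K_F, Kinv_F, smul_smul]
  congr 3
  · rw [zpow_neg, zpow_ofNat]; field_simp
  · rw [zpow_ofNat]; field_simp

lemma CC_comm_K : CC p * KK p = KK p * CC p := by
  have h1 : FF p * EE p * KK p = KK p * (FF p * EE p) := by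
    rw [← mul_assoc, K_F, smul_mul_assoc, mul_assoc (FF p) (KK p), K_E, mul_smul_comm, smul_smul,
      ← zpow_add₀ (q_ne p), mul_assoc]
    simp
  rw [CC, add_mul, mul_add, h1]
  simp only [smul_mul_assoc, add_mul, mul_smul_comm, mul_add, KKinv_mul, Kinv_mul]

lemma CC_central (hp : 2 ≤ p) (x : Uq p) : CC p * x = x * CC p := by
  have := subalg_top p (Subalgebra.centralizer ℂ {CC p}) ?_ ?_ ?_ ?_ x
  · rw [Subalgebra.mem_centralizer_iff] at this
    exact this _ rfl
  all_goals
    rw [Subalgebra.mem_centralizer_iff]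
    rintro g rfl
  · exact CC_comm_E p hp
  · exact CC_comm_F p hp
  · exact CC_comm_K p
  · calc CC p * KKinv p = KKinv p * (KK p * CC p) * KKinv p := by
          rw [← mul_assoc, Kinv_mul, one_mul]
      _ = KKinv p * CC p * (KK p * KKinv p) := by rw [← CC_comm_K]; simp only [mul_assoc]
      _ = _ := by rw [KKinv_mul, mul_one]

/-- polynomial in the Casimir -/
def fC (f : Polynomial ℂ) : Uq p := Polynomial.aeval (CC p) f

lemma fC_mul (f g : Polynomial ℂ) : fC p (f * g) = fC p f * fC p g := map_mul _ _ _
lemma fC_add (f g : Polynomial ℂ) : fC p (f + g) = fC p f + fC p g := map_add _ _ _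
lemma fC_one : fC p 1 = 1 := map_one _
lemma fC_XsubC (c : ℂ) : fC p (Polynomial.X - Polynomial.C c) = CC p - c • 1 := by
  simp [fC, Algebra.algebraMap_eq_smul_one]

lemma fC_central (hp : 2 ≤ p) (f : Polynomial ℂ) (x : Uq p) : fC p f * x = x * fC p f := by
  have h : CC p ∈ Subalgebra.center ℂ (Uq p) := by
    rw [Subalgebra.mem_center_iff]
    intro b; exact (CC_central p hp b).symm
  have h2 : fC p f ∈ Subalgebra.center ℂ (Uq p) := by
    have := (Polynomial.aeval (⟨CC p, h⟩ : Subalgebra.center ℂ (Uq p)) f).2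
    have h3 : ((Polynomial.aeval (⟨CC p, h⟩ : Subalgebra.center ℂ (Uq p)) f :
      Subalgebra.center ℂ (Uq p)) : Uq p) = fC p f := by
      rw [← Subalgebra.coe_val, ← Polynomial.aeval_algHom_apply]; rfl
    rwa [h3] at this
  rw [Subalgebra.mem_center_iff] at h2
  exact (h2 x).symm

/-- idempotents for `K` -/
def ee (j : ℤ) : Uq p :=
  ((2 * p : ℕ) : ℂ)⁻¹ • ∑ m ∈ Finset.range (2 * p), (q p ^ (-j) • KK p) ^ m

lemma qj_pow (hp : 2 ≤ p) (j : ℤ) : (q p ^ j) ^ (2 * p) = 1 := by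
  rw [← zpow_natCast, ← zpow_mul, q_zpow_one_iff p hp]
  exact ⟨j, by push_cast; ring⟩

lemma K_ee (hp : 2 ≤ p) (j : ℤ) : KK p * ee p j = q p ^ j • ee p j := by
  have h := mul_geom_sum (q p ^ (-j) • KK p) (2 * p)
  rw [smul_pow, K_pow, qj_pow p hp, one_smul, sub_self, sub_mul, one_mul, sub_eq_zero,
    smul_mul_assoc] at h
  have h2 : KK p * ∑ m ∈ Finset.range (2 * p), (q p ^ (-j) • KK p) ^ m =
      q p ^ j • ∑ m ∈ Finset.range (2 * p), (q p ^ (-j) • KK p) ^ m := by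
    conv_rhs => rw [← h]
    rw [smul_smul, ← zpow_add₀ (q_ne p)]
    simp
  rw [ee, mul_smul_comm, h2, smul_comm]

lemma ee_K (j : ℤ) : ee p j * KK p = KK p * ee p j := by
  rw [ee, smul_mul_assoc, mul_smul_comm]
  congr 1
  have : Commute (KK p) (∑ m ∈ Finset.range (2 * p), (q p ^ (-j) • KK p) ^ m) := by
    apply Commute.sum_right
    intro m _
    apply Commute.pow_right
    exact (Commute.refl _).smul_right _
  exact this.eq.symm

lemma Kinv_ee (hp : 2 ≤ p) (j : ℤ) : KKinv p * ee p j = q p ^ (-j) • ee p j := by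
  have h : ee p j = q p ^ (-j) • (KK p * ee p j) := by
    rw [K_ee p hp, smul_smul, ← zpow_add₀ (q_ne p)]; simp
  conv_lhs => rw [h]
  rw [mul_smul_comm, ← mul_assoc, Kinv_mul, one_mul]

lemma E_ee (j : ℤ) : EE p * ee p j = ee p (j + 2) * EE p := by
  rw [ee, ee, smul_mul_assoc, mul_smul_comm]
  congr 1
  rw [Finset.mul_sum, Finset.sum_mul]
  apply Finset.sum_congr rfl
  intro m _
  have : SemiconjBy (EE p) (q p ^ (-j) • KK p) (q p ^ (-(j + 2)) • KK p) := by
    rw [SemiconjBy, mul_smul_comm, smul_mul_assoc, K_E, smul_smul, ← zpow_add₀ (q_ne p)]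
    congr 2; ring
  exact (this.pow_right m).eq

lemma F_ee (j : ℤ) : FF p * ee p j = ee p (j - 2) * FF p := by
  rw [ee, ee, smul_mul_assoc, mul_smul_comm]
  congr 1
  rw [Finset.mul_sum, Finset.sum_mul]
  apply Finset.sum_congr rfl
  intro m _
  have : SemiconjBy (FF p) (q p ^ (-j) • KK p) (q p ^ (-(j - 2)) • KK p) := by
    rw [SemiconjBy, mul_smul_comm, smul_mul_assoc, K_F, smul_smul, ← zpow_add₀ (q_ne p)]
    congr 2; ring
  exact (this.pow_right m).eq

lemma ee_period (hp : 2 ≤ p) (j k : ℤ) (h : (2 * (p : ℤ)) ∣ j - k) : ee p j = ee p k := by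
  have : q p ^ (-j) = q p ^ (-k) := by
    rw [q_zpow_eq_iff p hp]
    rw [show -j - -k = -(j - k) by ring]
    exact dvd_neg.mpr h
  rw [ee, ee, this]

lemma geom_zero (hp : 2 ≤ p) (w : ℤ) :
    ((2 * p : ℕ) : ℂ)⁻¹ * ∑ m ∈ Finset.range (2 * p), (q p ^ w) ^ m =
      if (2 * (p : ℤ)) ∣ w then 1 else 0 := by
  split_ifs with h
  · rw [← q_zpow_one_iff p hp] at h
    rw [h]
    simp only [one_pow, Finset.sum_const, Finset.card_range, nsmul_eq_mul, mul_one]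
    apply inv_mul_cancel₀
    exact_mod_cast (by omega : 2 * p ≠ 0)
  · rw [← q_zpow_one_iff p hp] at h
    have h2 := mul_geom_sum (q p ^ w) (2 * p)
    rw [qj_pow p hp, sub_self] at h2
    rcases mul_eq_zero.mp h2 with h3 | h3
    · exact absurd (sub_eq_zero.mp h3) h
    · rw [h3, mul_zero]

lemma sum_ee (hp : 2 ≤ p) : ∑ j ∈ Finset.range (2 * p), ee p j = 1 := by
  simp only [ee, smul_pow]
  rw [← Finset.smul_sum, Finset.sum_comm]
  simp only [← Finset.sum_smul]
  rw [Finset.smul_sum]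
  have h : ∀ m ∈ Finset.range (2 * p), ((2 * p : ℕ) : ℂ)⁻¹ •
      ((∑ i ∈ Finset.range (2 * p), (q p ^ (-(i : ℤ))) ^ m) • KK p ^ m) =
      if m = 0 then 1 else 0 := by
    intro m hm
    rw [smul_smul]
    have h1 : ∀ i ∈ Finset.range (2 * p),
        (q p ^ (-(i : ℤ))) ^ m = (q p ^ (-(m : ℤ))) ^ i := by
      intro i _
      rw [← zpow_natCast, ← zpow_mul, ← zpow_natCast, ← zpow_mul]
      congr 1; ring
    rw [Finset.sum_congr rfl h1, geom_zero p hp]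
    by_cases h0 : m = 0
    · subst h0; simp
    · rw [if_neg, if_neg h0, zero_smul]
      intro hd
      have hd2 : (2 * (p : ℤ)) ∣ (m : ℤ) := (dvd_neg).mp hd
      have := Int.le_of_dvd (by omega) hd2
      have := Finset.mem_range.mp hm
      omega
  rw [Finset.sum_congr rfl h, Finset.sum_ite_eq']
  rw [if_pos (Finset.mem_range.mpr (by omega))]

lemma FE_ee (hp : 2 ≤ p) (j : ℤ) :
    FF p * EE p * ee p j = fC p (Polynomial.X - Polynomial.C (cv p (j + 1))) * ee p j := by
  rw [fC_XsubC, CC, cv]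
  simp only [sub_mul, add_mul, smul_mul_assoc, one_mul, K_ee p hp, Kinv_ee p hp]
  have h1 : q p ^ (j + 1) = q p * q p ^ j := by rw [zpow_add₀ (q_ne p), zpow_one, mul_comm]
  have h2 : q p ^ (-(j + 1)) = (q p)⁻¹ * q p ^ (-j) := by
    rw [neg_add, zpow_add₀ (q_ne p), zpow_neg_one, mul_comm]
  rw [h1, h2, div_eq_inv_mul]
  module

lemma EF_ee (hp : 2 ≤ p) (j : ℤ) :
    EE p * FF p * ee p j = fC p (Polynomial.X - Polynomial.C (cv p (j - 1))) * ee p j := by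
  rw [fC_XsubC, CC_eq' p hp, cv]
  simp only [sub_mul, add_mul, smul_mul_assoc, one_mul, K_ee p hp, Kinv_ee p hp]
  have h1 : q p ^ (j - 1) = (q p)⁻¹ * q p ^ j := by
    rw [zpow_sub₀ (q_ne p), zpow_one, div_eq_mul_inv, mul_comm]
  have h2 : q p ^ (-(j - 1)) = q p * q p ^ (-j) := by
    rw [neg_sub, sub_eq_add_neg, zpow_add₀ (q_ne p), zpow_one]
  rw [h1, h2, div_eq_inv_mul]
  module

lemma Epow_ee (a : ℕ) (j : ℤ) : EE p ^ a * ee p j = ee p (j + 2 * a) * EE p ^ a := by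
  induction a generalizing j with
  | zero => simp
  | succ n ih =>
    rw [pow_succ, mul_assoc, E_ee, ← mul_assoc, ih, mul_assoc]
    congr 2; push_cast; ring

lemma Fpow_ee (a : ℕ) (j : ℤ) : FF p ^ a * ee p j = ee p (j - 2 * a) * FF p ^ a := by
  induction a generalizing j with
  | zero => simp
  | succ n ih =>
    rw [pow_succ, mul_assoc, F_ee, ← mul_assoc, ih, mul_assoc]
    congr 2; push_cast; ring

/-- spanning elements -/
def WE (a : ℕ) (f : Polynomial ℂ) (j : ℤ) : Uq p := EE p ^ a * fC p f * ee p j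
def WF (a : ℕ) (f : Polynomial ℂ) (j : ℤ) : Uq p := FF p ^ a * fC p f * ee p j

lemma WE_alt (hp : 2 ≤ p) (a : ℕ) (f : Polynomial ℂ) (j : ℤ) :
    WE p a f j = fC p f * ee p (j + 2 * a) * EE p ^ a := by
  rw [WE, ← fC_central p hp, mul_assoc, Epow_ee, mul_assoc]

lemma WF_alt (hp : 2 ≤ p) (a : ℕ) (f : Polynomial ℂ) (j : ℤ) :
    WF p a f j = fC p f * ee p (j - 2 * a) * FF p ^ a := by
  rw [WF, ← fC_central p hp, mul_assoc, Fpow_ee, mul_assoc]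

lemma E_WE (a : ℕ) (f : Polynomial ℂ) (j : ℤ) : EE p * WE p a f j = WE p (a + 1) f j := by
  rw [WE, WE, pow_succ']; simp only [mul_assoc]
lemma F_WF (a : ℕ) (f : Polynomial ℂ) (j : ℤ) : FF p * WF p a f j = WF p (a + 1) f j := by
  rw [WF, WF, pow_succ']; simp only [mul_assoc]

lemma E_WF (hp : 2 ≤ p) (a : ℕ) (f : Polynomial ℂ) (j : ℤ) : EE p * WF p (a + 1) f j =
    WF p a ((Polynomial.X - Polynomial.C (cv p (j - 2 * a - 1))) * f) j := by
  rw [WF_alt p hp, WF_alt p hp, fC_mul, pow_succ']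
  calc _ = fC p f * (EE p * ee p (j - 2 * ↑(a + 1)) * FF p * FF p ^ a) := by
        simp only [← mul_assoc]; rw [fC_central p hp]
    _ = fC p f * (EE p * FF p * ee p (j - 2 * a) * FF p ^ a) := by
        congr 2
        rw [mul_assoc, mul_assoc, F_ee]
        congr 3
        push_cast; ring
    _ = _ := by
        rw [EF_ee p hp, ← mul_assoc, ← mul_assoc, ← fC_mul, ← fC_mul, mul_comm f]

lemma F_WE (hp : 2 ≤ p) (a : ℕ) (f : Polynomial ℂ) (j : ℤ) : FF p * WE p (a + 1) f j =
    WE p a ((Polynomial.X - Polynomial.C (cv p (j + 2 * a + 1))) * f) j := by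
  rw [WE_alt p hp, WE_alt p hp, fC_mul, pow_succ']
  calc _ = fC p f * (FF p * ee p (j + 2 * ↑(a + 1)) * EE p * EE p ^ a) := by
        simp only [← mul_assoc]; rw [fC_central p hp]
    _ = fC p f * (FF p * EE p * ee p (j + 2 * a) * EE p ^ a) := by
        congr 2
        rw [mul_assoc, mul_assoc, E_ee]
        congr 3
        push_cast; ring
    _ = _ := by
        rw [FE_ee p hp, ← mul_assoc, ← mul_assoc, ← fC_mul, ← fC_mul, mul_comm f]

lemma WE_E (a : ℕ) (f : Polynomial ℂ) (hp : 2 ≤ p) (j : ℤ) :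
    WE p a f j * EE p = WE p (a + 1) f (j - 2) := by
  rw [WE_alt p hp, WE_alt p hp, pow_succ, ← mul_assoc]
  congr 4; push_cast; ring
lemma WF_F (a : ℕ) (f : Polynomial ℂ) (hp : 2 ≤ p) (j : ℤ) :
    WF p a f j * FF p = WF p (a + 1) f (j + 2) := by
  rw [WF_alt p hp, WF_alt p hp, pow_succ, ← mul_assoc]
  congr 4; push_cast; ring

lemma WF_E (hp : 2 ≤ p) (a : ℕ) (f : Polynomial ℂ) (j : ℤ) : WF p (a + 1) f j * EE p =
    WF p a ((Polynomial.X - Polynomial.C (cv p (j - 1))) * f) (j - 2) := by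
  have h := E_ee p (j - 2)
  rw [sub_add_cancel] at h
  have h2 := FE_ee p hp (j - 2)
  rw [WF, WF, mul_assoc, ← h, pow_succ, ← fC_central p hp, mul_comm, fC_mul]
  rw [show j - 2 + 1 = j - 1 by ring] at h2
  calc _ = fC p f * (FF p ^ a * (FF p * EE p * ee p (j - 2))) := by simp only [mul_assoc]
    _ = _ := by
      rw [h2]; simp only [← mul_assoc]; rw [← fC_central p hp f (FF p ^ a)]

lemma WE_F (hp : 2 ≤ p) (a : ℕ) (f : Polynomial ℂ) (j : ℤ) : WE p (a + 1) f j * FF p =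
    WE p a ((Polynomial.X - Polynomial.C (cv p (j + 1))) * f) (j + 2) := by
  have h := F_ee p (j + 2)
  rw [add_sub_cancel_right] at h
  have h2 := EF_ee p hp (j + 2)
  rw [WE, WE, mul_assoc, ← h, pow_succ, ← fC_central p hp, mul_comm, fC_mul]
  rw [show j + 2 - 1 = j + 1 by ring] at h2
  calc _ = fC p f * (EE p ^ a * (EE p * FF p * ee p (j + 2))) := by simp only [mul_assoc]
    _ = _ := by
      rw [h2]; simp only [← mul_assoc]; rw [← fC_central p hp f (EE p ^ a)]

lemma WE_zero (f : Polynomial ℂ) (j : ℤ) : WE p 0 f j = fC p f * ee p j := by simp [WE]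
lemma WF_zero (f : Polynomial ℂ) (j : ℤ) : WF p 0 f j = fC p f * ee p j := by simp [WF]

lemma K_WE (hp : 2 ≤ p) (a : ℕ) (f : Polynomial ℂ) (j : ℤ) :
    KK p * WE p a f j = q p ^ (j + 2 * a) • WE p a f j := by
  rw [WE_alt p hp, ← mul_assoc, ← mul_assoc, ← fC_central p hp, mul_assoc (fC p f), K_ee p hp]
  simp only [mul_smul_comm, smul_mul_assoc]
lemma K_WF (hp : 2 ≤ p) (a : ℕ) (f : Polynomial ℂ) (j : ℤ) :
    KK p * WF p a f j = q p ^ (j - 2 * a) • WF p a f j := by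
  rw [WF_alt p hp, ← mul_assoc, ← mul_assoc, ← fC_central p hp, mul_assoc (fC p f), K_ee p hp]
  simp only [mul_smul_comm, smul_mul_assoc]
lemma WE_K (hp : 2 ≤ p) (a : ℕ) (f : Polynomial ℂ) (j : ℤ) :
    WE p a f j * KK p = q p ^ j • WE p a f j := by
  rw [WE, mul_assoc, ee_K, K_ee p hp, mul_smul_comm]
lemma WF_K (hp : 2 ≤ p) (a : ℕ) (f : Polynomial ℂ) (j : ℤ) :
    WF p a f j * KK p = q p ^ j • WF p a f j := by
  rw [WF, mul_assoc, ee_K, K_ee p hp, mul_smul_comm]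
lemma Kinv_W (x : Uq p) (c : ℂ) (hc : c ≠ 0) (h : KK p * x = c • x) :
    KKinv p * x = c⁻¹ • x := by
  calc KKinv p * x = c⁻¹ • (KKinv p * (c • x)) := by
        rw [mul_smul_comm, smul_smul, inv_mul_cancel₀ hc, one_smul]
    _ = _ := by rw [← h, ← mul_assoc, Kinv_mul, one_mul]

/-- span of the `WE`, `WF` -/
def SW : Submodule ℂ (Uq p) :=
  Submodule.span ℂ {x | (∃ a f j, x = WE p a f j) ∨ (∃ a f j, x = WF p a f j)}

lemma WE_mem (a : ℕ) (f : Polynomial ℂ) (j : ℤ) : WE p a f j ∈ SW p :=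
  Submodule.subset_span (Or.inl ⟨a, f, j, rfl⟩)
lemma WF_mem (a : ℕ) (f : Polynomial ℂ) (j : ℤ) : WF p a f j ∈ SW p :=
  Submodule.subset_span (Or.inr ⟨a, f, j, rfl⟩)

/-- left stabilizer of `SW` -/
def stab : Subalgebra ℂ (Uq p) where
  carrier := {y | ∀ x ∈ SW p, y * x ∈ SW p}
  mul_mem' := by intro a b ha hb x hx; rw [mul_assoc]; exact ha _ (hb _ hx)
  add_mem' := by intro a b ha hb x hx; rw [add_mul]; exact add_mem (ha _ hx) (hb _ hx)
  algebraMap_mem' := by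
    intro r x hx
    rw [Algebra.algebraMap_eq_smul_one, smul_mul_assoc, one_mul]
    exact Submodule.smul_mem _ _ hx

lemma mem_stab (y : Uq p) (h1 : ∀ a f j, y * WE p a f j ∈ SW p)
    (h2 : ∀ a f j, y * WF p a f j ∈ SW p) : y ∈ stab p := by
  intro x hx
  induction hx using Submodule.span_induction with
  | mem x h =>
    rcases h with ⟨a, f, j, rfl⟩ | ⟨a, f, j, rfl⟩
    · exact h1 _ _ _
    · exact h2 _ _ _
  | zero => rw [mul_zero]; exact zero_mem _
  | add x z _ _ hx hz => rw [mul_add]; exact add_mem hx hz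
  | smul c x _ hx => rw [mul_smul_comm]; exact Submodule.smul_mem _ _ hx

lemma SW_top (hp : 2 ≤ p) (x : Uq p) : x ∈ SW p := by
  have h1 : (1 : Uq p) ∈ SW p := by
    rw [← sum_ee p hp]
    apply Submodule.sum_mem
    intro j _
    have := WE_mem p 0 1 j
    rwa [WE_zero, fC_one, one_mul] at this
  have h2 : x ∈ stab p := by
    apply subalg_top
    · apply mem_stab
      · intro a f j; rw [E_WE]; exact WE_mem _ _ _ _
      · intro a f j
        cases a with
        | zero => rw [WF_zero, ← WE_zero, E_WE]; exact WE_mem _ _ _ _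
        | succ a => rw [E_WF p hp]; exact WF_mem _ _ _ _
    · apply mem_stab
      · intro a f j
        cases a with
        | zero => rw [WE_zero, ← WF_zero, F_WF]; exact WF_mem _ _ _ _
        | succ a => rw [F_WE p hp]; exact WE_mem _ _ _ _
      · intro a f j; rw [F_WF]; exact WF_mem _ _ _ _
    · apply mem_stab
      · intro a f j; rw [K_WE p hp]; exact Submodule.smul_mem _ _ (WE_mem _ _ _ _)
      · intro a f j; rw [K_WF p hp]; exact Submodule.smul_mem _ _ (WF_mem _ _ _ _)
    · apply mem_stab
      · intro a f j
        rw [Kinv_W p _ _ (zpow_ne_zero _ (q_ne p)) (K_WE p hp a f j)]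
        exact Submodule.smul_mem _ _ (WE_mem _ _ _ _)
      · intro a f j
        rw [Kinv_W p _ _ (zpow_ne_zero _ (q_ne p)) (K_WF p hp a f j)]
        exact Submodule.smul_mem _ _ (WF_mem _ _ _ _)
  have := h2 1 h1
  rwa [mul_one] at this

lemma SW_induct (hp : 2 ≤ p) (φ : Uq p →ₗ[ℂ] ℂ) (h1 : ∀ a f j, φ (WE p a f j) = 0)
    (h2 : ∀ a f j, φ (WF p a f j) = 0) : φ = 0 := by
  ext x
  have hx := SW_top p hp x
  change φ x = 0
  induction hx using Submodule.span_induction with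
  | mem x h =>
    rcases h with ⟨a, f, j, rfl⟩ | ⟨a, f, j, rfl⟩
    · exact h1 _ _ _
    · exact h2 _ _ _
  | zero => exact map_zero _
  | add x z _ _ hx hz => rw [map_add, hx, hz, add_zero]
  | smul c x _ hx => rw [map_smul, hx, smul_zero]

/-! ### Symmetric forms -/

lemma form_WE_zero (hp : 2 ≤ p) (φ : Uq p →ₗ[ℂ] ℂ) (hφ : ∀ x, φ (KK p * x) = φ (x * KK p))
    (a : ℕ) (f : Polynomial ℂ) (j : ℤ) : φ (WE p (a + 1) f j) = 0 := by
  by_cases ha : p ≤ a + 1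
  · rw [WE, pow_eq_zero_of_le ha (E_pow p), zero_mul, zero_mul, map_zero]
  · have h := hφ (WE p (a + 1) f j)
    rw [K_WE p hp, WE_K p hp, map_smul, map_smul, smul_eq_mul, smul_eq_mul] at h
    by_contra h0
    have h3 := mul_right_cancel₀ h0 h
    rw [q_zpow_eq_iff p hp] at h3
    have := Int.le_of_dvd (by push_cast; omega) h3
    push_cast at this
    omega

lemma form_WF_zero (hp : 2 ≤ p) (φ : Uq p →ₗ[ℂ] ℂ) (hφ : ∀ x, φ (KK p * x) = φ (x * KK p))
    (a : ℕ) (f : Polynomial ℂ) (j : ℤ) : φ (WF p (a + 1) f j) = 0 := by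
  by_cases ha : p ≤ a + 1
  · rw [WF, pow_eq_zero_of_le ha (F_pow p), zero_mul, zero_mul, map_zero]
  · have h := hφ (WF p (a + 1) f j)
    rw [K_WF p hp, WF_K p hp, map_smul, map_smul, smul_eq_mul, smul_eq_mul] at h
    by_contra h0
    have h3 := mul_right_cancel₀ h0 h.symm
    rw [q_zpow_eq_iff p hp] at h3
    have := Int.le_of_dvd (by push_cast; omega) h3
    push_cast at this
    omega

/-- elements symmetric for `φ` -/
def symSub (φ : Uq p →ₗ[ℂ] ℂ) : Subalgebra ℂ (Uq p) where
  carrier := {y | ∀ x, φ (y * x) = φ (x * y)}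
  mul_mem' := by
    intro a b ha hb x
    rw [mul_assoc, ha, mul_assoc, hb, mul_assoc]
  add_mem' := by intro a b ha hb x; rw [add_mul, mul_add, map_add, map_add, ha, hb]
  algebraMap_mem' := by intro r x; rw [Algebra.commutes]

lemma comm_form_zero (hp : 2 ≤ p) (φ : Uq p →ₗ[ℂ] ℂ) (y : Uq p)
    (h1 : ∀ a f j, φ (y * WE p a f j) = φ (WE p a f j * y))
    (h2 : ∀ a f j, φ (y * WF p a f j) = φ (WF p a f j * y)) : y ∈ symSub p φ := by
  have h : φ.comp (LinearMap.mulLeft ℂ y - LinearMap.mulRight ℂ y) = 0 := by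
    apply SW_induct p hp
    · intro a f j
      simp [h1]
    · intro a f j
      simp [h2]
  intro x
  have := LinearMap.congr_fun h x
  simpa [sub_eq_zero] using this

lemma slf_criterion (hp : 2 ≤ p) (φ : Uq p →ₗ[ℂ] ℂ) (hφ : ∀ x, φ (KK p * x) = φ (x * KK p))
    (h : ∀ (f : Polynomial ℂ) (j : ℤ),
      φ (fC p ((Polynomial.X - Polynomial.C (cv p (j + 1))) * f) * ee p j) =
      φ (fC p ((Polynomial.X - Polynomial.C (cv p (j + 1))) * f) * ee p (j + 2))) :
    IsSLF p φ := by
  intro x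
  change x ∈ symSub p φ
  apply subalg_top
  · apply comm_form_zero p hp
    · intro a f j
      rw [E_WE, WE_E p a f hp, form_WE_zero p hp φ hφ, form_WE_zero p hp φ hφ]
    · intro a f j
      cases a with
      | zero =>
        rw [WF_zero, ← WE_zero, E_WE, WE_E p _ f hp, form_WE_zero p hp φ hφ,
          form_WE_zero p hp φ hφ]
      | succ a =>
        rw [E_WF p hp, WF_E p hp]
        cases a with
        | zero =>
          rw [WF_zero, WF_zero]
          have := h f (j - 2)
          rw [show j - 2 + 1 = j - 1 by ring, sub_add_cancel] at this
          rw [this]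
          simp
        | succ a => rw [form_WF_zero p hp φ hφ, form_WF_zero p hp φ hφ]
  · apply comm_form_zero p hp
    · intro a f j
      cases a with
      | zero =>
        rw [WE_zero, ← WF_zero, F_WF, WF_F p _ f hp, form_WF_zero p hp φ hφ,
          form_WF_zero p hp φ hφ]
      | succ a =>
        rw [F_WE p hp, WE_F p hp]
        cases a with
        | zero =>
          rw [WE_zero, WE_zero, ← h]
          simp
        | succ a => rw [form_WE_zero p hp φ hφ, form_WE_zero p hp φ hφ]
    · intro a f j
      rw [F_WF, WF_F p a f hp, form_WF_zero p hp φ hφ, form_WF_zero p hp φ hφ]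
  · exact hφ
  · intro x
    calc φ (KKinv p * x) = φ (KKinv p * x * KKinv p * KK p) := by
          rw [mul_assoc _ (KKinv p), Kinv_mul, mul_one]
      _ = φ (x * KKinv p) := by
          rw [← hφ, ← mul_assoc, ← mul_assoc, KKinv_mul, one_mul]

lemma slf_rel (hp : 2 ≤ p) (φ : Uq p →ₗ[ℂ] ℂ) (hφ : IsSLF p φ) (f : Polynomial ℂ) (j : ℤ) :
      φ (fC p ((Polynomial.X - Polynomial.C (cv p (j + 1))) * f) * ee p j) =
      φ (fC p ((Polynomial.X - Polynomial.C (cv p (j + 1))) * f) * ee p (j + 2)) := by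
  have h1 := F_WE p hp 0 f j
  have h2 := WE_F p hp 0 f j
  have h3 := hφ (FF p) (WE p (0 + 1) f j)
  rw [h1, h2, WE_zero, WE_zero] at h3
  simpa using h3

lemma FnEn (hp : 2 ≤ p) (n : ℕ) (j : ℤ) : FF p ^ n * EE p ^ n * ee p j =
    fC p (∏ i ∈ Finset.range n, (Polynomial.X - Polynomial.C (cv p (j + 2 * i + 1)))) * ee p j := by
  induction n with
  | zero => simp [fC_one]
  | succ n ih =>
    have h := F_WE p hp n 1 j
    rw [WE, WE, fC_one, mul_one, mul_one] at h
    rw [pow_succ, mul_assoc, mul_assoc, h, ← fC_central p hp, ← mul_assoc, ← mul_assoc,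
      ← fC_central p hp, mul_assoc, mul_assoc, ← mul_assoc (FF p ^ n), ih, ← mul_assoc, ← fC_mul,
      Finset.prod_range_succ, mul_comm]

end relations

/-! ### Upper bound -/

/-- product polynomial vanishing at all `cv k`, `k ≤ p`, `k ≠ s` -/
def pol (p : ℕ) (s : ℕ) : Polynomial ℂ :=
  ∏ k ∈ (Finset.range (p + 1)).erase s, (Polynomial.X - Polynomial.C (cv p k))

lemma pol_eval_ne (p : ℕ) (hp : 2 ≤ p) (s : ℕ) (hs : s ≤ p) : (pol p s).eval (cv p s) ≠ 0 := by
  rw [pol, Polynomial.eval_prod, Finset.prod_ne_zero_iff]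
  intro k hk
  rw [Finset.mem_erase, Finset.mem_range] at hk
  simp only [Polynomial.eval_sub, Polynomial.eval_X, Polynomial.eval_C]
  intro h
  exact hk.1 (cv_inj p hp s k hs (by omega) (sub_eq_zero.mp h)).symm

lemma pol_eval_zero (p : ℕ) (s k : ℕ) (hk : k ≤ p) (hks : k ≠ s) :
    (pol p s).eval (cv p k) = 0 := by
  rw [pol, Polynomial.eval_prod, Finset.prod_eq_zero_iff]
  refine ⟨k, ?_, by simp⟩
  rw [Finset.mem_erase, Finset.mem_range]
  omega

section upper
variable (p : ℕ)

lemma jump (hp : 2 ≤ p) (φ : Uq p →ₗ[ℂ] ℂ) (hφ : IsSLF p φ) (f : Polynomial ℂ) (k : ℤ) :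
    φ (fC p f * ee p (k + 1)) - φ (fC p f * ee p (k - 1)) =
      (φ (ee p (k + 1)) - φ (ee p (k - 1))) * f.eval (cv p k) := by
  have h := slf_rel p hp φ hφ (f /ₘ (Polynomial.X - Polynomial.C (cv p k))) (k - 1)
  rw [sub_add_cancel, show k - 1 + 2 = k + 1 by ring] at h
  have h2 := Polynomial.modByMonic_add_div f (Polynomial.X - Polynomial.C (cv p k))
  rw [Polynomial.modByMonic_X_sub_C_eq_C_eval] at h2
  have h3 : ∀ j, φ (fC p f * ee p j) = f.eval (cv p k) * φ (ee p j) +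
      φ (fC p ((Polynomial.X - Polynomial.C (cv p k)) *
        (f /ₘ (Polynomial.X - Polynomial.C (cv p k)))) * ee p j) := by
    intro j
    conv_lhs => rw [← h2]
    rw [fC_add, add_mul, map_add]
    congr 1
    rw [fC, Polynomial.aeval_C, Algebra.algebraMap_eq_smul_one, smul_mul_assoc, one_mul, map_smul,
      smul_eq_mul]
  rw [h3, h3, h]
  ring

lemma upper_inj (hp : 2 ≤ p) (φ : Uq p →ₗ[ℂ] ℂ) (hφ : IsSLF p φ)
    (h1 : ∀ t : ℕ, t < p - 1 → φ (ee p (-(t + 1 : ℤ) + 1)) - φ (ee p (-(t + 1 : ℤ) - 1)) = 0)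
    (h2 : ∀ i : ℕ, i < p → φ (CC p ^ i * ee p 0) = 0)
    (h3 : ∀ i : ℕ, i < p → φ (CC p ^ i * ee p 1) = 0) : φ = 0 := by
  have hper : ∀ k l : ℤ, (2 * (p : ℤ)) ∣ k - l →
      φ (ee p (k + 1)) - φ (ee p (k - 1)) = φ (ee p (l + 1)) - φ (ee p (l - 1)) := by
    intro k l h
    rw [ee_period p hp (k + 1) (l + 1) (by convert h using 1; ring),
      ee_period p hp (k - 1) (l - 1) (by convert h using 1; ring)]
  have hneg : ∀ k : ℤ, -(p : ℤ) < k → k < 0 → φ (ee p (k + 1)) - φ (ee p (k - 1)) = 0 := by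
    intro k hk1 hk2
    have := h1 (-k - 1).toNat (by omega)
    have e : -(((-k - 1).toNat : ℤ) + 1) = k := by omega
    rwa [e] at this
  have hpos : ∀ k : ℕ, k ≤ p → φ (ee p (k + 1)) - φ (ee p (k - 1)) = 0 := by
    intro k hk
    have htel := Finset.sum_range_sub
      (fun i : ℕ => φ (fC p (pol p k) * ee p (k + 2 * i - 1))) p
    have e : ee p (k + 2 * (p : ℕ) - 1) = ee p (k + 2 * (0 : ℕ) - 1) := by
      apply ee_period p hp
      exact ⟨1, by push_cast; ring⟩
    rw [e, sub_self] at htel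
    have hterm : ∀ i : ℕ, φ (fC p (pol p k) * ee p (k + 2 * (i + 1 : ℕ) - 1)) -
        φ (fC p (pol p k) * ee p (k + 2 * i - 1)) =
        (φ (ee p ((k + 2 * i : ℤ) + 1)) - φ (ee p ((k + 2 * i : ℤ) - 1))) *
          (pol p k).eval (cv p (k + 2 * i)) := by
      intro i
      rw [← jump p hp φ hφ]
      congr 4
      push_cast; ring
    rw [Finset.sum_congr rfl (fun i _ => hterm i), Finset.sum_eq_single 0] at htel
    · have := (mul_eq_zero.mp htel).resolve_right
        (by simpa using pol_eval_ne p hp k hk)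
      simpa using this
    · intro i hi hi0
      rw [Finset.mem_range] at hi
      rcases lt_or_ge p (k + 2 * i) with h | h
      · rcases lt_or_ge (k + 2 * i) (2 * p) with h' | h'
        · rw [hper _ (k + 2 * i - 2 * p) ⟨1, by ring⟩, hneg _ (by omega) (by omega), zero_mul]
        · have : cv p (k + 2 * i) = cv p ((k + 2 * i - 2 * p : ℕ) : ℤ) := by
            rw [cv_eq_iff p hp]
            left
            exact ⟨1, by push_cast [Nat.cast_sub h']; ring⟩
          rw [this, pol_eval_zero p _ _ (by omega) (by omega), mul_zero]
      · have := pol_eval_zero p k (k + 2 * i) h (by omega)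
        push_cast at this
        rw [this, mul_zero]
    · intro h
      exact absurd (Finset.mem_range.mpr (by omega)) h
  have hall : ∀ k : ℤ, φ (ee p (k + 1)) - φ (ee p (k - 1)) = 0 := by
    intro k
    have hm0 := Int.emod_nonneg k (b := 2 * (p : ℤ)) (by omega)
    have hm1 := Int.emod_lt_of_pos k (b := 2 * (p : ℤ)) (by omega)
    have hd : (2 * (p : ℤ)) ∣ k - k % (2 * (p : ℤ)) := Int.dvd_self_sub_emod
    generalize k % (2 * (p : ℤ)) = r at *
    rw [hper k r hd]
    rcases le_or_gt r p with h | h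
    · have := hpos r.toNat (by omega)
      rwa [Int.toNat_of_nonneg hm0] at this
    · rw [hper r (r - 2 * p) ⟨1, by ring⟩]
      exact hneg _ (by omega) (by omega)
  have hstep : ∀ (f : Polynomial ℂ) (j : ℤ),
      φ (fC p f * ee p (j + 2)) = φ (fC p f * ee p j) := by
    intro f j
    have := jump p hp φ hφ f (j + 1)
    rw [hall, zero_mul, sub_eq_zero] at this
    rwa [add_sub_cancel_right, add_assoc] at this
  have hshift : ∀ (f : Polynomial ℂ) (j i : ℤ),
      φ (fC p f * ee p (j + 2 * i)) = φ (fC p f * ee p j) := by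
    intro f j i
    induction i using Int.induction_on with
    | zero => simp
    | succ i ih => rw [← ih, ← hstep f (j + 2 * i)]; congr 3; ring
    | pred i ih => rw [← ih, ← hstep]; congr 3; ring
  have hbase : ∀ j : ℤ, (∀ i : ℕ, i < p → φ (CC p ^ i * ee p j) = 0) →
      ∀ f, φ (fC p f * ee p j) = 0 := by
    intro j hj f
    set Ψ := ∏ i ∈ Finset.range p, (Polynomial.X - Polynomial.C (cv p (j + 2 * i + 1))) with hΨ
    have hmon : Ψ.Monic := Polynomial.monic_prod_of_monic _ _ (fun i _ => Polynomial.monic_X_sub_C _)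
    have hdeg : Ψ.natDegree = p := by
      rw [hΨ, Polynomial.natDegree_prod_of_monic _ _ (fun i _ => Polynomial.monic_X_sub_C _)]
      simp
    have hz : fC p Ψ * ee p j = 0 := by
      rw [hΨ, ← FnEn p hp, F_pow, zero_mul, zero_mul]
    rw [← Polynomial.modByMonic_add_div f Ψ, fC_add, add_mul, mul_comm Ψ, fC_mul, mul_assoc, hz,
      mul_zero, add_zero]
    have hlt : (f %ₘ Ψ).natDegree < p := by
      rw [← hdeg]
      apply Polynomial.natDegree_modByMonic_lt _ hmon
      intro h
      rw [h, Polynomial.natDegree_one] at hdeg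
      omega
    rw [fC, Polynomial.aeval_eq_sum_range, Finset.sum_mul, map_sum]
    apply Finset.sum_eq_zero
    intro i hi
    rw [Finset.mem_range] at hi
    rw [smul_mul_assoc, map_smul, hj i (by omega), smul_zero]
  have hell : ∀ f j, φ (fC p f * ee p j) = 0 := by
    intro f j
    rcases Int.emod_two_eq_zero_or_one j with h | h
    · have e : j = 0 + 2 * (j / 2) := by omega
      rw [e, hshift]
      exact hbase 0 h2 f
    · have e : j = 1 + 2 * (j / 2) := by omega
      rw [e, hshift]
      exact hbase 1 h3 f
  apply SW_induct p hp
  · intro a f j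
    cases a with
    | zero => rw [WE_zero]; exact hell f j
    | succ a => exact form_WE_zero p hp φ (fun x => hφ _ _) a f j
  · intro a f j
    cases a with
    | zero => rw [WF_zero]; exact hell f j
    | succ a => exact form_WF_zero p hp φ (fun x => hφ _ _) a f j

/-- test map -/
def testMap : (Uq p →ₗ[ℂ] ℂ) →ₗ[ℂ] (GTAidx p → ℂ) where
  toFun φ := fun i => match i with
    | .inl (b, i) => φ (CC p ^ (i : ℕ) * ee p (if b then 0 else 1))
    | .inr t => φ (ee p (-((t : ℕ) + 1 : ℤ) + 1)) - φ (ee p (-((t : ℕ) + 1 : ℤ) - 1))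
  map_add' φ ψ := by
    ext i
    rcases i with ⟨b, i⟩ | t
    · simp
    · simp; ring
  map_smul' c φ := by
    ext i
    rcases i with ⟨b, i⟩ | t
    · simp
    · simp; ring

lemma testMap_inj (hp : 2 ≤ p) :
    Function.Injective ((testMap p).comp (SLFsub p).subtype) := by
  rw [← LinearMap.ker_eq_bot, LinearMap.ker_eq_bot']
  rintro ⟨φ, hφ⟩ h
  have h' : testMap p φ = 0 := h
  rw [Subtype.ext_iff]
  apply upper_inj p hp φ hφ
  · intro t ht
    exact congrFun h' (.inr ⟨t, ht⟩)
  · intro i hi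
    have := congrFun h' (.inl (true, ⟨i, hi⟩))
    simpa [testMap] using this
  · intro i hi
    have := congrFun h' (.inl (false, ⟨i, hi⟩))
    simpa [testMap] using this

lemma card_idx (hp : 2 ≤ p) : Fintype.card (GTAidx p) = 3 * p - 1 := by
  simp
  omega

/-- final linear algebra -/
lemma finish (hp : 2 ≤ p) (g : GTAidx p → (Uq p →ₗ[ℂ] ℂ)) (hg : ∀ i, g i ∈ SLFsub p)
    (hli : LinearIndependent ℂ g) : Submodule.span ℂ (Set.range g) = SLFsub p ∧
    Module.finrank ℂ ↥(SLFsub p) = 3 * p - 1 := by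
  have hfin : FiniteDimensional ℂ ↥(SLFsub p) :=
    FiniteDimensional.of_injective _ (testMap_inj p hp)
  have hle : Module.finrank ℂ ↥(SLFsub p) ≤ 3 * p - 1 := by
    have := LinearMap.finrank_le_finrank_of_injective (testMap_inj p hp)
    rwa [Module.finrank_fintype_fun_eq_card, card_idx p hp] at this
  have hsp : Submodule.span ℂ (Set.range g) ≤ SLFsub p := by
    rw [Submodule.span_le]
    rintro _ ⟨i, rfl⟩
    exact hg i
  have hfr : Module.finrank ℂ (Submodule.span ℂ (Set.range g)) = 3 * p - 1 := by
    rw [finrank_span_eq_card hli, card_idx p hp]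
  have heq := Submodule.eq_of_le_of_finrank_le hsp (by rw [hfr]; exact hle)
  exact ⟨heq, by rw [← heq, hfr]⟩

end upper

/-! ### Values on representations -/

section reps
variable (p : ℕ)
open Matrix

lemma mulVec_pow {n : Type} [Fintype n] [DecidableEq n] (M : Matrix n n ℂ) (v : n → ℂ) (c : ℂ)
    (h : M *ᵥ v = c • v) (m : ℕ) : (M ^ m) *ᵥ v = c ^ m • v := by
  induction m with
  | zero => simp
  | succ m ih =>
    rw [_root_.pow_succ, ← mulVec_mulVec, h, mulVec_smul, ih, smul_smul, _root_.pow_succ']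

variable {p} {n : Type} [Fintype n] [DecidableEq n] (ρ : Uq p →ₐ[ℂ] Matrix n n ℂ)

lemma rep_ee (hp : 2 ≤ p) (v : n → ℂ) (w : ℤ) (h : ρ (KK p) *ᵥ v = q p ^ w • v) (j : ℤ) :
    ρ (ee p j) *ᵥ v = (if (2 * (p : ℤ)) ∣ w - j then (1 : ℂ) else 0) • v := by
  rw [ee, map_smul, map_sum, smul_mulVec, sum_mulVec]
  have h1 : ∀ m ∈ Finset.range (2 * p), ρ ((q p ^ (-j) • KK p) ^ m) *ᵥ v =
      (q p ^ (w - j)) ^ m • v := by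
    intro m _
    rw [map_pow, map_smul]
    apply mulVec_pow
    rw [smul_mulVec, h, smul_smul, ← zpow_add₀ (q_ne p)]
    congr 2; ring
  rw [Finset.sum_congr rfl h1, ← Finset.sum_smul, smul_smul, geom_zero p hp]

lemma rep_Kinv (v : n → ℂ) (w : ℤ) (h : ρ (KK p) *ᵥ v = q p ^ w • v) :
    ρ (KKinv p) *ᵥ v = q p ^ (-w) • v := by
  have h1 : ρ (KKinv p) *ᵥ (ρ (KK p) *ᵥ v) = v := by
    rw [mulVec_mulVec, ← map_mul, Kinv_mul, map_one, one_mulVec]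
  rw [h, mulVec_smul] at h1
  conv_rhs => rw [← h1]
  rw [smul_smul, ← zpow_add₀ (q_ne p)]
  simp

lemma rep_CC (v a : n → ℂ) (w : ℤ) (β : ℂ) (h : ρ (KK p) *ᵥ v = q p ^ w • v)
    (h2 : ρ (FF p) *ᵥ (ρ (EE p) *ᵥ v) = β • v + a) :
    ρ (CC p) *ᵥ v = (β + cv p (w + 1)) • v + a := by
  rw [CC, map_add, map_mul, add_mulVec, ← mulVec_mulVec, h2, map_smul, map_add, map_smul, map_smul,
    smul_mulVec, add_mulVec, smul_mulVec, smul_mulVec, h, rep_Kinv ρ v w h, cv]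
  have h1 : q p ^ (w + 1) = q p * q p ^ w := by rw [zpow_add₀ (q_ne p), zpow_one, mul_comm]
  have h2 : q p ^ (-(w + 1)) = (q p)⁻¹ * q p ^ (-w) := by
    rw [neg_add, zpow_add₀ (q_ne p), _root_.zpow_neg_one, mul_comm]
  rw [h1, h2, div_eq_inv_mul]
  module

lemma rep_fC_jordan (b a : n → ℂ) (c : ℂ) (hb : ρ (CC p) *ᵥ b = c • b + a)
    (ha : ρ (CC p) *ᵥ a = c • a) (f : Polynomial ℂ) :
    ρ (fC p f) *ᵥ b = f.eval c • b + f.derivative.eval c • a := by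
  have hpow : ∀ m : ℕ, ρ (CC p ^ m) *ᵥ b = c ^ m • b + (m * c ^ (m - 1)) • a := by
    intro m
    induction m with
    | zero => simp
    | succ m ih =>
      rw [_root_.pow_succ', map_mul, ← mulVec_mulVec, ih, mulVec_add, mulVec_smul, mulVec_smul, hb, ha]
      rcases m with _ | m
      · simp
      · simp only [Nat.add_sub_cancel]
        push_cast
        module
  induction f using Polynomial.induction_on' with
  | add f g hf hg =>
    rw [fC_add, map_add, add_mulVec, hf, hg]
    simp only [Polynomial.eval_add, Polynomial.derivative_add]
    module
  | monomial m r =>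
    rw [fC, Polynomial.aeval_monomial, Algebra.algebraMap_eq_smul_one, smul_mul_assoc, one_mul,
      map_smul, smul_mulVec, hpow]
    simp only [Polynomial.eval_monomial, Polynomial.derivative_monomial]
    module

lemma rep_fC_eig (b : n → ℂ) (c : ℂ) (hb : ρ (CC p) *ᵥ b = c • b) (f : Polynomial ℂ) :
    ρ (fC p f) *ᵥ b = f.eval c • b := by
  have := rep_fC_jordan ρ b 0 c (by rw [hb, add_zero]) (by simp) f
  rwa [smul_zero, add_zero] at this

/-- weight counting -/
def cnt (p : ℕ) (n : ℕ) (w j : ℤ) : ℂ :=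
  ∑ i : Fin n, if (2 * (p : ℤ)) ∣ w - 2 * (i : ℕ) - j then (1 : ℂ) else 0

lemma weight_eq (hp : 2 ≤ p) (α : ℂ) (ε : ℤ) (hα : α = q p ^ (ε * p)) (w : ℤ) :
    α * q p ^ w = q p ^ (ε * p + w) := by
  rw [hα, zpow_add₀ (q_ne p)]

lemma cas_eq (hp : 2 ≤ p) (α : ℂ) (ε : ℤ) (hα : α = q p ^ (ε * p)) (hα2 : α = 1 ∨ α = -1)
    (s i : ℤ) :
    α * qi p i * qi p (s - i) + cv p (ε * p + (s - 1 - 2 * i) + 1) = cv p (ε * p + s) := by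
  have hq := q_ne p
  have hinv : q p ^ (-(ε * (p : ℤ))) = α := by
    rw [_root_.zpow_neg, ← hα]
    rcases hα2 with h | h <;> rw [h] <;> norm_num
  have hd := dq_ne p hp
  have hqi : ∀ k, qi p k = (q p ^ k - q p ^ (-k)) / dq p := fun k => rfl
  rw [hqi, hqi, cv, cv]
  have e1 : ε * p + (s - 1 - 2 * i) + 1 = ε * p + (s + -i + -i) := by ring
  have e2 : -(ε * p + (s + -i + -i)) = -(ε * p) + (-s + i + i) := by ring
  have e3 : -(s - i) = -s + i := by ring
  have e4 : -(ε * p + s) = -(ε * p) + -s := by ring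
  rw [e1, e2, e3, e4, sub_eq_add_neg s i]
  simp only [zpow_add₀ hq, hinv, ← hα]
  rw [_root_.zpow_neg, _root_.zpow_neg]
  have hs := zpow_ne_zero s hq
  have hi := zpow_ne_zero i hq
  field_simp
  ring

section X

lemma X_CC
    (ρX : (α : ℂ) → (s : ℕ) → (Uq p →ₐ[ℂ] Matrix (Fin s) (Fin s) ℂ))
    (hX : IsXRep p ρX)
    (hp : 2 ≤ p) (α : ℂ) (ε : ℤ) (hα : α = q p ^ (ε * p)) (hα2 : α = 1 ∨ α = -1)
    (s : ℕ) (hs1 : 1 ≤ s) (hs : s ≤ p) (i : Fin s) :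
    ρX α s (CC p) *ᵥ Pi.single i 1 = cv p (ε * p + s) • Pi.single i 1 ∧
    ρX α s (KK p) *ᵥ Pi.single i 1 =
      q p ^ (ε * p + ((s : ℤ) - 1 - 2 * (i : ℕ))) • Pi.single i 1 := by
  obtain ⟨hK, hE, hF⟩ := hX α hα2 s hs1 hs
  have hK' : ρX α s (KK p) *ᵥ Pi.single i 1 =
      q p ^ (ε * p + ((s : ℤ) - 1 - 2 * (i : ℕ))) • Pi.single i 1 := by
    rw [hK, XK, ← weight_eq hp α ε hα]
    ext k
    simp [diagonal_apply, Pi.single_apply]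
  refine ⟨?_, hK'⟩
  rw [← cas_eq hp α ε hα hα2 s (i : ℕ)]
  have := rep_CC (ρX α s) (Pi.single i 1) 0 _ (α * qi p (i : ℕ) * qi p ((s : ℤ) - (i : ℕ))) hK' ?_
  · rwa [add_zero] at this
  rw [hE, hF, add_zero]
  obtain ⟨i, hi⟩ := i
  cases i with
  | zero =>
    have : XE p α s *ᵥ Pi.single ⟨0, hi⟩ 1 = 0 := by
      ext k; simp [XE]
    rw [this, mulVec_zero]
    simp [qi]
  | succ i =>
    have h1 : XE p α s *ᵥ Pi.single ⟨i + 1, hi⟩ 1 =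
        (α * qi p (i + 1 : ℕ) * qi p ((s : ℤ) - (i + 1 : ℕ))) • Pi.single ⟨i, by omega⟩ 1 := by
      ext k; simp [XE, Pi.single_apply, Fin.ext_iff]
    have h2 : XF s *ᵥ Pi.single ⟨i, by omega⟩ 1 = Pi.single ⟨i + 1, hi⟩ 1 := by
      ext k; simp [XF, Pi.single_apply, Fin.ext_iff]
    rw [h1, mulVec_smul, h2]

lemma chi_val
    (ρX : (α : ℂ) → (s : ℕ) → (Uq p →ₐ[ℂ] Matrix (Fin s) (Fin s) ℂ))
    (hX : IsXRep p ρX)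
    (hp : 2 ≤ p) (α : ℂ) (ε : ℤ) (hα : α = q p ^ (ε * p)) (hα2 : α = 1 ∨ α = -1)
    (s : ℕ) (hs1 : 1 ≤ s) (hs : s ≤ p) (f : Polynomial ℂ) (j : ℤ) :
    chiOf p (ρX α s) (fC p f * ee p j) =
      f.eval (cv p (ε * p + s)) * cnt p s (ε * p + s - 1) j := by
  have h : ∀ i : Fin s, ρX α s (fC p f * ee p j) i i = f.eval (cv p (ε * p + s)) *
      if (2 * (p : ℤ)) ∣ (ε * p + s - 1) - 2 * (i : ℕ) - j then (1 : ℂ) else 0 := by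
    intro i
    obtain ⟨h1, h2⟩ := X_CC ρX hX hp α ε hα hα2 s hs1 hs i
    have h3 : (ρX α s (fC p f * ee p j) *ᵥ Pi.single i 1) i = ρX α s (fC p f * ee p j) i i := by
      simp
    rw [← h3, map_mul, ← mulVec_mulVec, rep_ee _ hp _ _ h2, mulVec_smul, rep_fC_eig _ _ _ h1]
    simp only [Pi.smul_apply, Pi.single_eq_same, smul_eq_mul, mul_one]
    rw [mul_comm, show (ε * p + s - 1 - 2 * (i : ℕ) - j : ℤ) =
      ε * p + (s - 1 - 2 * (i : ℕ)) - j by ring]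
  simp only [chiOf, LinearMap.comp_apply, traceLinearMap_apply, AlgHom.toLinearMap_apply, trace,
    diag_apply, h, cnt, Finset.mul_sum]

end X

lemma entry_apply {m : Type} (i j : m) (M : Matrix m m ℂ) : entry i j M = M i j := rfl

lemma GOf_apply (ρP : (α : ℂ) → (s : ℕ) → (Uq p →ₐ[ℂ] Matrix (PIdx p s) (PIdx p s) ℂ))
    (s : ℕ) (x : Uq p) : GOf p ρP s x =
      ∑ i : Fin s, ρP 1 s x (.inr (.inr (.inr i))) (.inl i) +
      ∑ i : Fin (p - s), ρP (-1) (p - s) x (.inr (.inr (.inr i))) (.inl i) := by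
  simp only [GOf, LinearMap.add_apply, LinearMap.sum_apply, LinearMap.comp_apply,
    AlgHom.toLinearMap_apply, entry_apply]

section P

lemma P_CC
    (ρP : (α : ℂ) → (s : ℕ) → (Uq p →ₐ[ℂ] Matrix (PIdx p s) (PIdx p s) ℂ))
    (hP : IsPRep p ρP)
    (hp : 2 ≤ p) (α : ℂ) (ε : ℤ) (hα : α = q p ^ (ε * p)) (hα2 : α = 1 ∨ α = -1)
    (s : ℕ) (hs1 : 1 ≤ s) (hs : s ≤ p - 1) (i : Fin s) :
    ρP α s (CC p) *ᵥ Pi.single (.inl i) 1 =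
      cv p (ε * p + s) • Pi.single (.inl i) 1 + Pi.single (.inr (.inr (.inr i))) 1 ∧
    ρP α s (CC p) *ᵥ Pi.single (.inr (.inr (.inr i))) 1 =
      cv p (ε * p + s) • Pi.single (.inr (.inr (.inr i))) 1 ∧
    ρP α s (KK p) *ᵥ Pi.single (.inl i) 1 =
      q p ^ (ε * p + ((s : ℤ) - 1 - 2 * (i : ℕ))) • Pi.single (.inl i) 1 := by
  obtain ⟨hK, hE, hF⟩ := hP α hα2 s hs1 hs
  have hK' : ρP α s (KK p) *ᵥ Pi.single (.inl i) 1 =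
      q p ^ (ε * p + ((s : ℤ) - 1 - 2 * (i : ℕ))) • Pi.single (.inl i) 1 := by
    rw [hK, PK, ← weight_eq hp α ε hα, diagonal_mulVec_single, ← Pi.single_smul]
    rfl
  have hK2 : ρP α s (KK p) *ᵥ Pi.single (.inr (.inr (.inr i))) 1 =
      q p ^ (ε * p + ((s : ℤ) - 1 - 2 * (i : ℕ))) • Pi.single (.inr (.inr (.inr i))) 1 := by
    rw [hK, PK, ← weight_eq hp α ε hα, diagonal_mulVec_single, ← Pi.single_smul]
    rfl
  refine ⟨?_, ?_, hK'⟩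
  · rw [← cas_eq hp α ε hα hα2 s (i : ℕ)]
    apply rep_CC (ρP α s) _ _ _ _ hK'
    rw [hE, hF]
    obtain ⟨i, hi⟩ := i
    cases i with
    | zero =>
      have h1 : PE p α s *ᵥ Pi.single (.inl ⟨0, hi⟩) 1 =
          Pi.single (.inr (.inl ⟨p - s - 1, by omega⟩)) 1 := by
        ext k
        rcases k with k | k | k | k
        · simp [PE]
        · have : (k : ℕ) + 1 = p - s ↔ (k : ℕ) = p - s - 1 := by omega
          simp [PE, Pi.single_apply, Fin.ext_iff, this]
        · simp [PE]
        · simp [PE]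
      have h2 : PF p s *ᵥ Pi.single (.inr (.inl ⟨p - s - 1, by omega⟩)) 1 =
          Pi.single (.inr (.inr (.inr ⟨0, hi⟩))) 1 := by
        have e : p - s - 1 + 1 = p - s := by omega
        ext k
        rcases k with k | k | k | k
        · simp [PF]
        · have : ¬ ((k : ℕ) = p - s) := by omega
          simp [PF, e, this]
        · simp [PF]
        · simp [PF, Pi.single_apply, Fin.ext_iff, e]
      rw [h1, h2]
      simp [qi]
    | succ i =>
      have h1 : PE p α s *ᵥ Pi.single (.inl ⟨i + 1, hi⟩) 1 =
          (α * qi p (i + 1 : ℕ) * qi p ((s : ℤ) - (i + 1 : ℕ))) • Pi.single (.inl ⟨i, by omega⟩) 1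
          + Pi.single (.inr (.inr (.inr ⟨i, by omega⟩))) 1 := by
        ext k
        rcases k with k | k | k | k <;> simp [PE, Pi.single_apply, Fin.ext_iff]
      have h2 : PF p s *ᵥ Pi.single (.inl ⟨i, by omega⟩) 1 = Pi.single (.inl ⟨i + 1, hi⟩) 1 := by
        ext k
        have : ¬ (i + 1 = s) := by omega
        rcases k with k | k | k | k <;> simp [PF, Pi.single_apply, Fin.ext_iff, this]
      have h3 : PF p s *ᵥ Pi.single (.inr (.inr (.inr ⟨i, by omega⟩))) 1 =
          Pi.single (.inr (.inr (.inr ⟨i + 1, hi⟩))) 1 := by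
        ext k
        rcases k with k | k | k | k <;> simp [PF, Pi.single_apply, Fin.ext_iff]
      rw [h1, mulVec_add, mulVec_smul, h2, h3]
  · rw [← cas_eq hp α ε hα hα2 s (i : ℕ)]
    have := rep_CC (ρP α s) _ 0 _ (α * qi p (i : ℕ) * qi p ((s : ℤ) - (i : ℕ))) hK2 ?_
    · rwa [add_zero] at this
    rw [hE, hF, add_zero]
    obtain ⟨i, hi⟩ := i
    cases i with
    | zero =>
      have h1 : PE p α s *ᵥ Pi.single (.inr (.inr (.inr ⟨0, hi⟩))) 1 = 0 := by
        ext k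
        rcases k with k | k | k | k <;> simp [PE]
      rw [h1, mulVec_zero]
      simp [qi]
    | succ i =>
      have h1 : PE p α s *ᵥ Pi.single (.inr (.inr (.inr ⟨i + 1, hi⟩))) 1 =
          (α * qi p (i + 1 : ℕ) * qi p ((s : ℤ) - (i + 1 : ℕ))) •
            Pi.single (.inr (.inr (.inr ⟨i, by omega⟩))) 1 := by
        ext k
        rcases k with k | k | k | k <;> simp [PE, Pi.single_apply, Fin.ext_iff]
      have h3 : PF p s *ᵥ Pi.single (.inr (.inr (.inr ⟨i, by omega⟩))) 1 =
          Pi.single (.inr (.inr (.inr ⟨i + 1, hi⟩))) 1 := by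
        ext k
        rcases k with k | k | k | k <;> simp [PF, Pi.single_apply, Fin.ext_iff]
      rw [h1, mulVec_smul, h3]

lemma H_val
    (ρP : (α : ℂ) → (s : ℕ) → (Uq p →ₐ[ℂ] Matrix (PIdx p s) (PIdx p s) ℂ))
    (hP : IsPRep p ρP)
    (hp : 2 ≤ p) (α : ℂ) (ε : ℤ) (hα : α = q p ^ (ε * p)) (hα2 : α = 1 ∨ α = -1)
    (s : ℕ) (hs1 : 1 ≤ s) (hs : s ≤ p - 1) (f : Polynomial ℂ) (j : ℤ) :
    ∑ i : Fin s, ρP α s (fC p f * ee p j) (.inr (.inr (.inr i))) (.inl i) =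
      f.derivative.eval (cv p (ε * p + s)) * cnt p s (ε * p + s - 1) j := by
  have h : ∀ i : Fin s, ρP α s (fC p f * ee p j) (.inr (.inr (.inr i))) (.inl i) =
      f.derivative.eval (cv p (ε * p + s)) *
      if (2 * (p : ℤ)) ∣ (ε * p + s - 1) - 2 * (i : ℕ) - j then (1 : ℂ) else 0 := by
    intro i
    obtain ⟨h1, h1', h2⟩ := P_CC ρP hP hp α ε hα hα2 s hs1 hs i
    have h3 : (ρP α s (fC p f * ee p j) *ᵥ Pi.single (.inl i) 1) (.inr (.inr (.inr i))) =
        ρP α s (fC p f * ee p j) (.inr (.inr (.inr i))) (.inl i) := by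
      simp
    rw [← h3, map_mul, ← mulVec_mulVec, rep_ee _ hp _ _ h2, mulVec_smul,
      rep_fC_jordan _ _ _ _ h1 h1']
    rw [show (ε * p + s - 1 - 2 * (i : ℕ) - j : ℤ) =
      ε * p + (s - 1 - 2 * (i : ℕ)) - j by ring]
    simp
  simp only [h, cnt, Finset.mul_sum]

lemma G_val
    (ρP : (α : ℂ) → (s : ℕ) → (Uq p →ₐ[ℂ] Matrix (PIdx p s) (PIdx p s) ℂ))
    (hP : IsPRep p ρP)
    (hp : 2 ≤ p) (s : ℕ) (hs1 : 1 ≤ s) (hs : s ≤ p - 1) (f : Polynomial ℂ) (j : ℤ) :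
    GOf p ρP s (fC p f * ee p j) =
      f.derivative.eval (cv p s) * cnt p p (s - 1) j := by
  have h1 := H_val ρP hP hp 1 0 (by simp) (Or.inl rfl) s hs1 hs f j
  have h2 := H_val ρP hP hp (-1) 1 (by rw [one_mul, q_pow_p p hp]) (Or.inr rfl) (p - s)
    (by omega) (by omega) f j
  have e : cv p (1 * p + (p - s : ℕ)) = cv p s := by
    rw [cv_eq_iff p hp]
    right
    exact ⟨1, by push_cast [Nat.cast_sub (by omega : s ≤ p)]; ring⟩
  rw [GOf_apply, h1, h2, e, zero_mul, zero_add, ← mul_add]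
  congr 1
  simp only [cnt]
  rw [Fin.sum_univ_eq_sum_range
      (fun i : ℕ => if (2 * (p : ℤ)) ∣ ((s : ℤ) - 1) - 2 * (i : ℕ) - j then (1 : ℂ) else 0) s,
    Fin.sum_univ_eq_sum_range
      (fun i : ℕ => if (2 * (p : ℤ)) ∣ (1 * (p : ℤ) + (p - s : ℕ) - 1) - 2 * (i : ℕ) - j
        then (1 : ℂ) else 0) (p - s),
    Fin.sum_univ_eq_sum_range
      (fun i : ℕ => if (2 * (p : ℤ)) ∣ ((s : ℤ) - 1) - 2 * (i : ℕ) - j then (1 : ℂ) else 0) p]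
  conv_rhs => rw [show p = s + (p - s) by omega, Finset.sum_range_add]
  rw [show s + (p - s) = p by omega]
  congr 1
  apply Finset.sum_congr rfl
  intro i _
  have hsp : s ≤ p := by omega
  congr 1
  rw [eq_iff_iff, ← dvd_add_right (dvd_refl (2 * (p : ℤ)))
    (c := (s : ℤ) - 1 - 2 * ((s + i : ℕ) : ℤ) - j)]
  push_cast [Nat.cast_sub hsp]
  rw [show (1 * (p : ℤ) + (p - s) - 1 - 2 * i - j) = 2 * p + (s - 1 - 2 * (s + i) - j) by ring]

lemma G_slf
    (ρP : (α : ℂ) → (s : ℕ) → (Uq p →ₐ[ℂ] Matrix (PIdx p s) (PIdx p s) ℂ))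
    (hP : IsPRep p ρP)
    (hp : 2 ≤ p) (s : ℕ) (hs1 : 1 ≤ s) (hs : s ≤ p - 1) : IsSLF p (GOf p ρP s) := by
  apply slf_criterion p hp
  · intro x
    have h1 := (hP 1 (Or.inl rfl) s hs1 hs).1
    have h2 := (hP (-1) (Or.inr rfl) (p - s) (by omega) (by omega)).1
    simp only [GOf_apply, map_mul, h1, h2, PK, diagonal_mul, mul_diagonal]
    congr 1 <;>
    · apply Finset.sum_congr rfl
      intro i _
      rw [mul_comm]
      rfl
  · intro f j
    rw [G_val ρP hP hp s hs1 hs, G_val ρP hP hp s hs1 hs]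
    congr 1
    simp only [cnt]
    rw [Fin.sum_univ_eq_sum_range
      (fun i : ℕ => if (2 * (p : ℤ)) ∣ ((s : ℤ) - 1) - 2 * (i : ℕ) - j then (1 : ℂ) else 0) p,
      Fin.sum_univ_eq_sum_range
      (fun i : ℕ => if (2 * (p : ℤ)) ∣ ((s : ℤ) - 1) - 2 * (i : ℕ) - (j + 2) then (1 : ℂ) else 0) p]
    have ha := Finset.sum_range_succ
      (fun i : ℕ => if (2 * (p : ℤ)) ∣ ((s : ℤ) - 1) - 2 * (i : ℕ) - j then (1 : ℂ) else 0) p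
    have hb := Finset.sum_range_succ'
      (fun i : ℕ => if (2 * (p : ℤ)) ∣ ((s : ℤ) - 1) - 2 * (i : ℕ) - j then (1 : ℂ) else 0) p
    have hc : ((2 * (p : ℤ)) ∣ ((s : ℤ) - 1) - 2 * (p : ℕ) - j) ↔
        ((2 * (p : ℤ)) ∣ ((s : ℤ) - 1) - 2 * (0 : ℕ) - j) := by
      rw [← dvd_add_right (dvd_refl (2 * (p : ℤ))) (c := (s : ℤ) - 1 - 2 * (p : ℕ) - j)]
      rw [show 2 * (p : ℤ) + (s - 1 - 2 * p - j) = s - 1 - 2 * (0 : ℕ) - j by push_cast; ring]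
    simp only [hc] at ha
    rw [ha] at hb
    have := add_right_cancel hb
    rw [this]
    apply Finset.sum_congr rfl
    intro i _
    congr 2
    push_cast; ring

end P

lemma cnt_ne_zero (s : ℕ) (hs : 1 ≤ s) (w : ℤ) : cnt p s w w ≠ 0 := by
  rw [cnt, Finset.sum_boole, Nat.cast_ne_zero, Finset.card_ne_zero]
  exact ⟨⟨0, hs⟩, by simp⟩

lemma chi_slf (hp : 2 ≤ p) : IsSLF p (chiOf p ρ) := by
  intro x y
  simp only [chiOf, LinearMap.comp_apply, traceLinearMap_apply, AlgHom.toLinearMap_apply, map_mul]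
  exact trace_mul_comm _ _

section final

lemma GTA_val_pos
    (ρX : (α : ℂ) → (s : ℕ) → (Uq p →ₐ[ℂ] Matrix (Fin s) (Fin s) ℂ))
    (hX : IsXRep p ρX)
    (ρP : (α : ℂ) → (s : ℕ) → (Uq p →ₐ[ℂ] Matrix (PIdx p s) (PIdx p s) ℂ))
    (hP : IsPRep p ρP)
    (hp : 2 ≤ p) (s : Fin p) (f : Polynomial ℂ) (j : ℤ) :
    GTA p ρX ρP (.inl (true, s)) (fC p f * ee p j) =
      f.eval (cv p ((s : ℕ) + 1 : ℕ)) * cnt p (s + 1) (s : ℕ) j := by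
  have := chi_val ρX hX hp 1 0 (by simp) (Or.inl rfl) (s + 1) (by omega) (by omega) f j
  simp only [GTA, if_true]
  rw [this]
  simp

lemma GTA_val_neg
    (ρX : (α : ℂ) → (s : ℕ) → (Uq p →ₐ[ℂ] Matrix (Fin s) (Fin s) ℂ))
    (hX : IsXRep p ρX)
    (ρP : (α : ℂ) → (s : ℕ) → (Uq p →ₐ[ℂ] Matrix (PIdx p s) (PIdx p s) ℂ))
    (hP : IsPRep p ρP)
    (hp : 2 ≤ p) (s : Fin p) (f : Polynomial ℂ) (j : ℤ) :
    GTA p ρX ρP (.inl (false, s)) (fC p f * ee p j) =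
      f.eval (cv p (p - 1 - (s : ℕ) : ℕ)) * cnt p (s + 1) (p + (s : ℕ)) j := by
  have := chi_val ρX hX hp (-1) 1 (by rw [one_mul, q_pow_p p hp]) (Or.inr rfl) (s + 1)
    (by omega) (by omega) f j
  have e : cv p (1 * p + (s + 1 : ℕ)) = cv p (p - 1 - (s : ℕ) : ℕ) := by
    rw [cv_eq_iff p hp]
    right
    exact ⟨1, by omega⟩
  simp only [GTA, Bool.false_eq_true, if_false]
  rw [this, e]
  congr 2
  push_cast; ring

lemma GTA_val_G
    (ρX : (α : ℂ) → (s : ℕ) → (Uq p →ₐ[ℂ] Matrix (Fin s) (Fin s) ℂ))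
    (hX : IsXRep p ρX)
    (ρP : (α : ℂ) → (s : ℕ) → (Uq p →ₐ[ℂ] Matrix (PIdx p s) (PIdx p s) ℂ))
    (hP : IsPRep p ρP)
    (hp : 2 ≤ p) (t : Fin (p - 1)) (f : Polynomial ℂ) (j : ℤ) :
    GTA p ρX ρP (.inr t) (fC p f * ee p j) =
      f.derivative.eval (cv p ((t : ℕ) + 1 : ℕ)) * cnt p p (t : ℕ) j := by
  have := G_val ρP hP hp (t + 1) (by omega) (by omega) f j
  simp only [GTA]
  rw [this]
  simp

lemma GTA_li
    (ρX : (α : ℂ) → (s : ℕ) → (Uq p →ₐ[ℂ] Matrix (Fin s) (Fin s) ℂ))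
    (hX : IsXRep p ρX)
    (ρP : (α : ℂ) → (s : ℕ) → (Uq p →ₐ[ℂ] Matrix (PIdx p s) (PIdx p s) ℂ))
    (hP : IsPRep p ρP)
    (hp : 2 ≤ p) : LinearIndependent ℂ (GTA p ρX ρP) := by
  rw [Fintype.linearIndependent_iff]
  intro g hg
  have happ : ∀ x, ∑ i, g i * GTA p ρX ρP i x = 0 := by
    intro x
    have := LinearMap.congr_fun hg x
    simpa [LinearMap.sum_apply] using this
  have hG : ∀ t, g (.inr t) = 0 := by
    intro t
    have ht := t.2
    have h := happ (fC p (pol p (t + 1) ^ 2 *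
      (Polynomial.X - Polynomial.C (cv p ((t : ℕ) + 1 : ℕ)))) * ee p (t : ℕ))
    rw [Finset.sum_eq_single (.inr t)] at h
    · refine (mul_eq_zero.mp h).resolve_right ?_
      rw [GTA_val_G ρX hX ρP hP hp]
      apply mul_ne_zero
      · have := pol_eval_ne p hp (t + 1) (by omega)
        simpa [Polynomial.derivative_mul] using this
      · exact cnt_ne_zero p (by omega) _
    · rintro (⟨b, s⟩ | t') _ hne
      · cases b
        · rw [GTA_val_neg ρX hX ρP hP hp]
          by_cases hs : p - 1 - (s : ℕ) = t + 1
          · rw [hs]; simp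
          · rw [Polynomial.eval_mul, Polynomial.eval_pow,
              pol_eval_zero p (t + 1) (p - 1 - s) (by omega) hs]
            simp
        · rw [GTA_val_pos ρX hX ρP hP hp]
          by_cases hs : (s : ℕ) = t
          · rw [hs]; simp
          · rw [Polynomial.eval_mul, Polynomial.eval_pow,
              pol_eval_zero p (t + 1) (s + 1) (by omega) (by omega)]
            simp
      · rw [GTA_val_G ρX hX ρP hP hp]
        have hne' : (t' : ℕ) ≠ t := by
          intro h; apply hne; rw [Fin.ext h]
        have h0 := pol_eval_zero p (t + 1) (t' + 1) (by omega) (by omega)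
        have : Polynomial.eval (cv p ((t' : ℕ) + 1 : ℕ)) (Polynomial.derivative (pol p (t + 1) ^ 2 *
            (Polynomial.X - Polynomial.C (cv p ((t : ℕ) + 1 : ℕ))))) = 0 := by
          rw [pow_two]
          simp only [Polynomial.derivative_mul, Polynomial.eval_add, Polynomial.eval_mul, h0]
          ring
        rw [this, zero_mul, mul_zero]
    · intro h; exact absurd (Finset.mem_univ _) h
  have hpos : ∀ s, g (.inl (true, s)) = 0 := by
    intro s
    have hs := s.2
    have h := happ (fC p (pol p (s + 1)) * ee p (s : ℕ))
    rw [Finset.sum_eq_single (.inl (true, s))] at h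
    · refine (mul_eq_zero.mp h).resolve_right ?_
      rw [GTA_val_pos ρX hX ρP hP hp]
      exact mul_ne_zero (pol_eval_ne p hp (s + 1) (by omega)) (cnt_ne_zero _ (by omega) _)
    · rintro (⟨b, s'⟩ | t') _ hne
      · cases b
        · rw [GTA_val_neg ρX hX ρP hP hp]
          by_cases hs' : p - 1 - (s' : ℕ) = s + 1
          · have : cnt p (s' + 1) (p + (s' : ℕ)) (s : ℕ) = 0 := by
              rw [cnt]
              apply Finset.sum_eq_zero
              intro i _
              rw [if_neg]
              intro hd
              have hi := i.2
              have := Int.le_of_dvd (by omega) hd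
              omega
            rw [this, mul_zero, mul_zero]
          · rw [pol_eval_zero p (s + 1) (p - 1 - s') (by omega) hs']
            simp
        · have hne' : (s' : ℕ) ≠ s := by
            intro h; apply hne; rw [Fin.ext h]
          rw [GTA_val_pos ρX hX ρP hP hp,
              pol_eval_zero p (s + 1) (s' + 1) (by omega) (by omega)]
          simp
      · rw [hG, zero_mul]
    · intro h; exact absurd (Finset.mem_univ _) h
  have hneg : ∀ s, g (.inl (false, s)) = 0 := by
    intro s
    have hs := s.2
    have h := happ (fC p (pol p (p - 1 - s)) * ee p (p + (s : ℕ)))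
    rw [Finset.sum_eq_single (.inl (false, s))] at h
    · refine (mul_eq_zero.mp h).resolve_right ?_
      rw [GTA_val_neg ρX hX ρP hP hp]
      exact mul_ne_zero (pol_eval_ne p hp (p - 1 - s) (by omega)) (cnt_ne_zero _ (by omega) _)
    · rintro (⟨b, s'⟩ | t') _ hne
      · cases b
        · have hne' : (s' : ℕ) ≠ s := by
            intro h; apply hne; rw [Fin.ext h]
          rw [GTA_val_neg ρX hX ρP hP hp,
            pol_eval_zero p (p - 1 - s) (p - 1 - s') (by omega) (by omega)]
          simp
        · rw [hpos, zero_mul]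
      · rw [hG, zero_mul]
    · intro h; exact absurd (Finset.mem_univ _) h
  rintro (⟨b, s⟩ | t)
  · cases b
    · exact hneg s
    · exact hpos s
  · exact hG t

lemma GTA_slf
    (ρX : (α : ℂ) → (s : ℕ) → (Uq p →ₐ[ℂ] Matrix (Fin s) (Fin s) ℂ))
    (hX : IsXRep p ρX)
    (ρP : (α : ℂ) → (s : ℕ) → (Uq p →ₐ[ℂ] Matrix (PIdx p s) (PIdx p s) ℂ))
    (hP : IsPRep p ρP)
    (hp : 2 ≤ p) (i : GTAidx p) : GTA p ρX ρP i ∈ SLFsub p := by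
  rcases i with ⟨b, s⟩ | t
  · exact chi_slf (ρX (if b then 1 else -1) ((s : ℕ) + 1)) hp
  · exact G_slf ρP hP hp (t + 1) (by omega) (by omega)

end final

end reps

/-- the `3p - 1` symmetric linear forms `χ^±_s` (`1 ≤ s ≤ p`) and
`G_{s'}` (`1 ≤ s' ≤ p-1`) form a basis of `SLF(Ū_q)`; in particular
`dim SLF(Ū_q) = 3p - 1`. -/
theorem statement_6 (p : ℕ) (hp : 2 ≤ p)
    (ρX : (α : ℂ) → (s : ℕ) → (Uq p →ₐ[ℂ] Matrix (Fin s) (Fin s) ℂ))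
    (hX : IsXRep p ρX)
    (ρP : (α : ℂ) → (s : ℕ) → (Uq p →ₐ[ℂ] Matrix (PIdx p s) (PIdx p s) ℂ))
    (hP : IsPRep p ρP) :
    (∀ idx : GTAidx p, GTA p ρX ρP idx ∈ SLFsub p)
    ∧ LinearIndependent ℂ (GTA p ρX ρP)
    ∧ Submodule.span ℂ (Set.range (GTA p ρX ρP)) = SLFsub p
    ∧ Module.finrank ℂ ↥(SLFsub p) = 3 * p - 1 := by
  have h1 := GTA_slf ρX hX ρP hP hp
  have h2 := GTA_li ρX hX ρP hP hp
  exact ⟨h1, h2, finish p hp _ h1 h2⟩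

end Uqsl2
end
end
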